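/- arXiv:1108.2982 — 2 statements merged into one kernel-verified Lean document; each statement's English description precedes it below -/
import Mathlib

section
/- Let q ≥ 1 and let u be a tempered distribution on ℝ^{1+q} = ℝ × ℝ^q with values in a finite-dimensional complex vector space E ≅ ℂ^m. (i) If there exists α ∈ ℝ such that supp(F₀u) ⊆ [α,∞) × ℝ^q, then WF(u) ⊆ K⁺ ∪ K⁰. (ii) If there exists β ∈ ℝ such that supp(F₀u) ⊆ (−∞,β] × ℝ^q, then WF(u) ⊆ K⁻ ∪ K⁰. -/
/-!
Only one test function `φ` near `x₀` is needed to show that `(x₀, k₀)` is a regular directed point,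
and it can be chosen as a tensor product `φ = b ⊗ a` of a space factor `b` and a time factor `a`.
Write `a` as the Fourier transform of a Schwartz function `f` (`timeFourier_surjective`).
Multiplying `φ` by the plane wave of frequency `k` translates `f` by `k 0` and modulates `b`
(`modulate_tens_timeFourier`).

Suppose the time frequencies of `u` are bounded below and `k₀ 0 < 0` (the other case is symmetric).
For `k` in a cone around `k₀` put `R = |k 0| / 2`, which is comparable to `‖k‖`, and cut `f` off
smoothly at radius `R`, `f = h + (f - h)`. The translate of `h` by `k 0` is supported within
distance `R` of `k 0`, hence outside the frequency support of `u` once `R` is large, so `h` does not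
contribute. The support hypothesis is local in `ℝ^{1+q}`, and `vanish_of_pfSupport` derives the
vanishing on tensor products from it by partitions of unity in space and in time. All Schwartz
seminorms of the remainder `f - h` are `O(R^{-M})` for every `M` (`exists_cutoff_bound`), while
modulation by `k` and the application of `u` cost at most a fixed power of `1 + ‖k‖`
(`exists_modulate_bound`, `exists_functional_bound`). Hence the localised Fourier transform decays
rapidly on the cone (`regular_of_window`).
-/

open MeasureTheory Complex

noncomputable section

abbrev Vec (p : ℕ) : Type := Fin p → ℝ

abbrev TD (p : ℕ) := SchwartzMap (Vec p) ℂ →L[ℂ] ℂ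

def modFn {p : ℕ} (φ : SchwartzMap (Vec p) ℂ) (k : Vec p) : Vec p → ℂ :=
  fun x => φ x * Complex.exp (-Complex.I * ((∑ i, x i * k i : ℝ) : ℂ))

def IsConicNbhd {p : ℕ} (Γ : Set (Vec p)) (k₀ : Vec p) : Prop :=
  IsOpen Γ ∧ k₀ ∈ Γ ∧ ∀ k ∈ Γ, ∀ t : ℝ, 0 < t → t • k ∈ Γ

def IsRegularDirectedPoint {p : ℕ} (u : TD p) (x₀ k₀ : Vec p) : Prop :=
  ∃ φ : SchwartzMap (Vec p) ℂ, HasCompactSupport ⇑φ ∧ φ x₀ ≠ 0 ∧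
    ∃ Γ : Set (Vec p), IsConicNbhd Γ k₀ ∧
      ∀ n : ℕ, ∃ C : ℝ, ∀ k ∈ Γ, ∀ ψ : SchwartzMap (Vec p) ℂ,
        (∀ x, ψ x = modFn φ k x) → ‖u ψ‖ ≤ C * (1 + ‖k‖) ^ (-(n : ℤ))

def wfSet {p : ℕ} (u : TD p) : Set (Vec p × Vec p) :=
  {z | z.2 ≠ 0 ∧ ¬ IsRegularDirectedPoint u z.1 z.2}

def wfSetVec {p m : ℕ} (u : Fin m → TD p) : Set (Vec p × Vec p) := ⋃ i, wfSet (u i)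

def partialFourierIntegral {q : ℕ} (φ : Vec (q+1) → ℂ) (y : Vec (q+1)) : ℂ :=
  ∫ t : ℝ, Complex.exp (-Complex.I * ((t * y 0 : ℝ) : ℂ)) * φ (Function.update y 0 t)

def PFVanishesOn {q : ℕ} (u : TD (q+1)) (U : Set (Vec (q+1))) : Prop :=
  ∀ φ ψ : SchwartzMap (Vec (q+1)) ℂ, HasCompactSupport ⇑φ → tsupport ⇑φ ⊆ U →
    (∀ y, ψ y = partialFourierIntegral ⇑φ y) → u ψ = 0

def pfSupport {q : ℕ} (u : TD (q+1)) : Set (Vec (q+1)) :=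
  {y | ¬ ∃ U : Set (Vec (q+1)), IsOpen U ∧ y ∈ U ∧ PFVanishesOn u U}

def fullFourierIntegral {p : ℕ} (φ : Vec p → ℂ) (y : Vec p) : ℂ :=
  ∫ x : Vec p, Complex.exp (-Complex.I * ((∑ i, x i * y i : ℝ) : ℂ)) * φ x

def FFVanishesOn {p : ℕ} (u : TD p) (U : Set (Vec p)) : Prop :=
  ∀ φ ψ : SchwartzMap (Vec p) ℂ, HasCompactSupport ⇑φ → tsupport ⇑φ ⊆ U →
    (∀ y, ψ y = fullFourierIntegral ⇑φ y) → u ψ = 0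

def ffSupport {p : ℕ} (u : TD p) : Set (Vec p) :=
  {y | ¬ ∃ U : Set (Vec p), IsOpen U ∧ y ∈ U ∧ FFVanishesOn u U}

open scoped SchwartzMap ContDiff FourierTransform

/-! ### Seminorm estimates for products -/

/-- Leibniz estimate at a single point `x`: multiplying a Schwartz function by a smooth function
whose derivatives at `x` are at most `B` costs only a factor `B * 2 ^ n`. -/
theorem leibniz_bound {E : Type*} [NormedAddCommGroup E] [NormedSpace ℝ E]
    (c : E → ℂ) (hc : ContDiff ℝ ∞ c) (f ψ : 𝓢(E, ℂ)) (hψ : ∀ x, ψ x = c x * f x)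
    (k n : ℕ) (x : E) (B : ℝ) (hB : ∀ j ≤ n, ‖iteratedFDeriv ℝ j c x‖ ≤ B) :
    ‖x‖ ^ k * ‖iteratedFDeriv ℝ n ψ x‖ ≤
      B * 2 ^ n * (Finset.Iic (k, n)).sup (schwartzSeminormFamily ℂ E ℂ) f := by
  set S := (Finset.Iic (k, n)).sup (schwartzSeminormFamily ℂ E ℂ) f with hS
  have h0 : (ψ : E → ℂ) = fun x => c x * f x := funext hψ
  have hB0 : 0 ≤ B := (norm_nonneg _).trans (hB 0 (Nat.zero_le _))
  have key := norm_iteratedFDeriv_mul_le (n := n) hc (f.smooth ⊤) x (by exact_mod_cast le_top)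
  have hf : ∀ i ≤ n, ‖x‖ ^ k * ‖iteratedFDeriv ℝ i f x‖ ≤ S := by
    intro i hi
    refine (SchwartzMap.le_seminorm ℂ k i f x).trans ?_
    have : schwartzSeminormFamily ℂ E ℂ (k, i) ≤
        (Finset.Iic (k, n)).sup (schwartzSeminormFamily ℂ E ℂ) :=
      Finset.le_sup (f := schwartzSeminormFamily ℂ E ℂ) (by simp [hi])
    exact this f
  rw [h0]
  calc ‖x‖ ^ k * ‖iteratedFDeriv ℝ n (fun x => c x * f x) x‖
      ≤ ‖x‖ ^ k * ∑ i ∈ Finset.range (n + 1), (n.choose i : ℝ) * ‖iteratedFDeriv ℝ i c x‖ *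
          ‖iteratedFDeriv ℝ (n - i) f x‖ := by gcongr
    _ = ∑ i ∈ Finset.range (n + 1), (n.choose i : ℝ) * (‖iteratedFDeriv ℝ i c x‖ *
          (‖x‖ ^ k * ‖iteratedFDeriv ℝ (n - i) f x‖)) := by
        rw [Finset.mul_sum]; exact Finset.sum_congr rfl fun i _ => by ring
    _ ≤ ∑ i ∈ Finset.range (n + 1), (n.choose i : ℝ) * (B * S) := by
        refine Finset.sum_le_sum fun i hi => ?_
        have hi' : i ≤ n := Nat.lt_succ_iff.mp (Finset.mem_range.mp hi)
        have := hB i hi'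
        have := hf (n - i) (Nat.sub_le _ _)
        gcongr
    _ = B * 2 ^ n * S := by
        rw [← Finset.sum_mul, ← Nat.cast_sum, Nat.sum_range_choose]; push_cast; ring

theorem norm_iteratedFDeriv_comp_clm_le {E F G : Type*} [NormedAddCommGroup E] [NormedSpace ℝ E]
    [NormedAddCommGroup F] [NormedSpace ℝ F] [NormedAddCommGroup G] [NormedSpace ℝ G]
    (L : E →L[ℝ] F) (f : F → G) (hf : ContDiff ℝ ∞ f) (n : ℕ) (x : E) :
    ‖iteratedFDeriv ℝ n (fun y => f (L y)) x‖ ≤ ‖L‖ ^ n * ‖iteratedFDeriv ℝ n f (L x)‖ := by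
  have := L.iteratedFDeriv_comp_right hf x (i := n) (by exact_mod_cast le_top)
  change ‖iteratedFDeriv ℝ n (f ∘ L) x‖ ≤ _
  rw [this]
  refine (ContinuousMultilinearMap.norm_compContinuousLinearMap_le _ _).trans ?_
  simp [mul_comm]

/-- The plane wave factor `x ↦ exp (-i ⟨x, k⟩)` occurring in `modFn`. -/
def wave {p : ℕ} (k x : Vec p) : ℂ := Complex.exp (-Complex.I * ((∑ i, x i * k i : ℝ) : ℂ))

/-- The linear form `x ↦ ⟨x, k⟩`. -/
def pairCLM {p : ℕ} (k : Vec p) : Vec p →L[ℝ] ℝ :=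
  ∑ i, k i • ContinuousLinearMap.proj (R := ℝ) (φ := fun _ : Fin p => ℝ) i

theorem pairCLM_apply {p : ℕ} (k x : Vec p) : pairCLM k x = ∑ i, x i * k i := by
  simp [pairCLM, mul_comm]

theorem norm_pairCLM_le {p : ℕ} (k : Vec p) : ‖pairCLM k‖ ≤ p * ‖k‖ := by
  refine ContinuousLinearMap.opNorm_le_bound _ (by positivity) fun x => ?_
  rw [pairCLM_apply]
  calc ‖∑ i, x i * k i‖ ≤ ∑ i : Fin p, ‖x‖ * ‖k‖ := by
        refine norm_sum_le_of_le _ fun i _ => ?_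
        rw [norm_mul]
        exact mul_le_mul (norm_le_pi_norm x i) (norm_le_pi_norm k i) (norm_nonneg _) (norm_nonneg _)
    _ = p * ‖k‖ * ‖x‖ := by simp; ring

theorem contDiff_expI : ContDiff ℝ ∞ (fun s : ℝ => Complex.exp (-Complex.I * (s : ℂ))) :=
  Complex.contDiff_exp.comp (contDiff_const.mul Complex.ofRealCLM.contDiff)

theorem norm_iteratedFDeriv_expI (n : ℕ) (s : ℝ) :
    ‖iteratedFDeriv ℝ n (fun s : ℝ => Complex.exp (-Complex.I * (s : ℂ))) s‖ = 1 := by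
  have key : ∀ n : ℕ, iteratedDeriv n (fun s : ℝ => Complex.exp (-Complex.I * (s : ℂ))) =
      fun s : ℝ => (-Complex.I) ^ n * Complex.exp (-Complex.I * (s : ℂ)) := by
    intro n
    induction n with
    | zero => simp
    | succ n ih =>
      rw [iteratedDeriv_succ, ih]
      funext s
      have h1 : HasDerivAt (fun s : ℝ => -Complex.I * (s : ℂ)) (-Complex.I) s := by
        simpa using (Complex.ofRealCLM.hasDerivAt (x := s)).const_mul (-Complex.I)
      rw [(h1.cexp.const_mul ((-Complex.I) ^ n)).deriv]
      ring
  rw [norm_iteratedFDeriv_eq_norm_iteratedDeriv, key, norm_mul, norm_pow, norm_neg, Complex.norm_I,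
    one_pow, one_mul, Complex.norm_exp]
  simp

theorem wave_eq {p : ℕ} (k : Vec p) :
    wave k = fun x => Complex.exp (-Complex.I * ((pairCLM k x : ℝ) : ℂ)) := by
  funext x; rw [pairCLM_apply]; rfl

theorem contDiff_wave {p : ℕ} (k : Vec p) : ContDiff ℝ ∞ (wave k) := by
  rw [wave_eq]; exact contDiff_expI.comp (pairCLM k).contDiff

theorem norm_iteratedFDeriv_wave_le {p : ℕ} (k x : Vec p) (n : ℕ) :
    ‖iteratedFDeriv ℝ n (wave k) x‖ ≤ (p * ‖k‖) ^ n := by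
  rw [wave_eq]
  refine (norm_iteratedFDeriv_comp_clm_le (pairCLM k) _ contDiff_expI n x).trans ?_
  rw [norm_iteratedFDeriv_expI, mul_one]
  exact pow_le_pow_left₀ (norm_nonneg _) (norm_pairCLM_le k) n

theorem wave_hasTemperateGrowth {p : ℕ} (k : Vec p) : (wave k).HasTemperateGrowth :=
  ⟨contDiff_wave k, fun n => ⟨0, (p * ‖k‖) ^ n, fun x => by
    simpa using norm_iteratedFDeriv_wave_le k x n⟩⟩

/-- Multiplication by the plane wave of frequency `k`, on Schwartz functions. -/
def modulate {p : ℕ} (k : Vec p) : 𝓢(Vec p, ℂ) →L[ℂ] 𝓢(Vec p, ℂ) :=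
  SchwartzMap.smulLeftCLM ℂ (wave k)

theorem modulate_apply {p : ℕ} (k : Vec p) (f : 𝓢(Vec p, ℂ)) (x : Vec p) :
    modulate k f x = wave k x * f x := by
  rw [modulate, SchwartzMap.smulLeftCLM_apply_apply (wave_hasTemperateGrowth k), smul_eq_mul]

/-- Modulation grows at most polynomially in the frequency, in every Schwartz seminorm. -/
theorem exists_modulate_bound {p : ℕ} (s : Finset (ℕ × ℕ)) :
    ∃ (t : Finset (ℕ × ℕ)) (N : ℕ) (C : ℝ), 0 ≤ C ∧ ∀ (k : Vec p) (f : 𝓢(Vec p, ℂ)),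
      s.sup (schwartzSeminormFamily ℂ (Vec p) ℂ) (modulate k f) ≤
        C * (1 + ‖k‖) ^ N * t.sup (schwartzSeminormFamily ℂ (Vec p) ℂ) f := by
  refine ⟨s.biUnion fun i => Finset.Iic i, s.sup Prod.snd,
    (p + 1) ^ s.sup Prod.snd * 2 ^ s.sup Prod.snd, by positivity, fun k f => ?_⟩
  set N := s.sup Prod.snd
  set T := (s.biUnion fun i => Finset.Iic i).sup (schwartzSeminormFamily ℂ (Vec p) ℂ)
  refine Seminorm.finset_sup_apply_le (by positivity) fun i hi => ?_
  have hiN : i.2 ≤ N := Finset.le_sup (f := Prod.snd) hi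
  refine SchwartzMap.seminorm_le_bound ℂ i.1 i.2 _ (by positivity) fun x => ?_
  have h1 : (1 : ℝ) ≤ (p + 1) * (1 + ‖k‖) := by
    nlinarith [norm_nonneg k, (Nat.cast_nonneg p : (0 : ℝ) ≤ p),
      mul_nonneg (Nat.cast_nonneg p : (0 : ℝ) ≤ p) (norm_nonneg k)]
  have h2 : (p : ℝ) * ‖k‖ ≤ (p + 1) * (1 + ‖k‖) := by
    nlinarith [norm_nonneg k, (Nat.cast_nonneg p : (0 : ℝ) ≤ p)]
  refine (leibniz_bound (wave k) (contDiff_wave k) f _ (modulate_apply k f) i.1 i.2 x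
    (((p + 1) * (1 + ‖k‖)) ^ N) fun j hj => ?_).trans ?_
  · refine (norm_iteratedFDeriv_wave_le k x j).trans ?_
    exact (pow_le_pow_left₀ (by positivity) h2 j).trans (pow_le_pow_right₀ h1 (hj.trans hiN))
  · have h3 : (Finset.Iic (i.1, i.2)).sup (schwartzSeminormFamily ℂ (Vec p) ℂ) f ≤ T f := by
      have : (Finset.Iic i).sup (schwartzSeminormFamily ℂ (Vec p) ℂ) ≤ T :=
        Finset.sup_mono (Finset.subset_biUnion_of_mem (fun i => Finset.Iic i) hi)
      exact this f
    have h4 : (2 : ℝ) ^ i.2 ≤ 2 ^ N := pow_le_pow_right₀ one_le_two hiN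
    calc _ ≤ ((p + 1) * (1 + ‖k‖)) ^ N * 2 ^ N * T f := by gcongr
      _ = _ := by rw [mul_pow]; ring

/-- Removing a ball of radius comparable to `R` from a Schwartz function leaves a remainder which
is `O(R ^ (-M))` in every seminorm, for every `M`. The cutoff `θ` vanishes near the origin and has
bounded derivatives; it is used at scale `R`. -/
theorem exists_cutoff_bound (θ : ℝ → ℂ) (hθ : ContDiff ℝ ∞ θ)
    (hθ0 : ∀ x, |x| < 1 / 2 → θ x = 0)
    (hθb : ∀ n : ℕ, ∃ B, ∀ x, ‖iteratedFDeriv ℝ n θ x‖ ≤ B)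
    (f : 𝓢(ℝ, ℂ)) (s : Finset (ℕ × ℕ)) (M : ℕ) :
    ∃ C : ℝ, 0 ≤ C ∧ ∀ R : ℝ, 1 ≤ R → ∀ g : 𝓢(ℝ, ℂ), (∀ x, g x = θ (R⁻¹ * x) * f x) →
      R ^ M * s.sup (schwartzSeminormFamily ℂ ℝ ℂ) g ≤ C := by
  choose B hB using hθb
  have hB0 : ∀ n, 0 ≤ B n := fun n => (norm_nonneg _).trans (hB n 0)
  set S : ℕ × ℕ → ℝ := fun i =>
    2 ^ M * ((∑ j ∈ Finset.range (i.2 + 1), B j) * 2 ^ i.2 *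
      (Finset.Iic (i.1 + M, i.2)).sup (schwartzSeminormFamily ℂ ℝ ℂ) f) with hS
  have hS0 : ∀ i, 0 ≤ S i := fun i => by
    have := Finset.sum_nonneg (s := Finset.range (i.2 + 1)) fun j _ => hB0 j
    positivity
  refine ⟨∑ i ∈ s, S i, Finset.sum_nonneg fun i _ => hS0 i, fun R hR g hg => ?_⟩
  have hRpos : 0 < R := by linarith
  have hRM : 0 < R ^ M := by positivity
  rw [mul_comm, ← le_div_iff₀ hRM]
  have hsum : 0 ≤ ∑ i ∈ s, S i := Finset.sum_nonneg fun i _ => hS0 i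
  refine Seminorm.finset_sup_apply_le (by positivity) fun i hi => ?_
  refine SchwartzMap.seminorm_le_bound ℂ i.1 i.2 _ (by positivity) fun x => ?_
  rw [le_div_iff₀ hRM]
  refine le_trans ?_ (Finset.single_le_sum (f := S) (fun i _ => hS0 i) hi)
  have hc : ContDiff ℝ ∞ fun x : ℝ => θ (R⁻¹ * x) := hθ.comp (contDiff_const.mul contDiff_id)
  rcases lt_or_ge |x| (R / 2) with hx | hx
  · -- the remainder vanishes identically near `x`
    have h0 : (g : ℝ → ℂ) =ᶠ[nhds x] fun _ => 0 := by
      have : ∀ᶠ y in nhds x, |y| < R / 2 := (continuous_abs.tendsto x).eventually_lt_const hx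
      filter_upwards [this] with y hy
      rw [hg, hθ0, zero_mul]
      rw [abs_mul, abs_inv, abs_of_pos hRpos, inv_mul_lt_iff₀ hRpos]
      linarith
    have h1 := (h0.iteratedFDeriv ℝ i.2).eq_of_nhds
    rw [h1]
    simpa [iteratedFDeriv_fun_zero, Pi.zero_apply] using hS0 i
  · have hj : ∀ j ≤ i.2, ‖iteratedFDeriv ℝ j (fun x : ℝ => θ (R⁻¹ * x)) x‖ ≤
        ∑ j ∈ Finset.range (i.2 + 1), B j := by
      intro j hj
      refine le_trans ?_ (Finset.single_le_sum (f := B) (fun j _ => hB0 j)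
        (Finset.mem_range.mpr (Nat.lt_succ_of_le hj)))
      have := iteratedFDeriv_comp_const_smul (𝕜 := ℝ) (i := j) R⁻¹
        (hθ.of_le (by exact_mod_cast le_top))
      simp only [smul_eq_mul] at this
      rw [this, norm_smul]
      refine (mul_le_of_le_one_left (norm_nonneg _) ?_).trans (hB j _)
      rw [norm_pow, norm_inv, Real.norm_of_nonneg hRpos.le]
      exact pow_le_one₀ (by positivity) (inv_le_one_of_one_le₀ hR)
    have hL := leibniz_bound _ hc f g hg (i.1 + M) i.2 x _ hj
    have hx2 : R ^ M ≤ (2 * ‖x‖) ^ M := by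
      refine pow_le_pow_left₀ hRpos.le ?_ M
      rw [Real.norm_eq_abs]; linarith
    calc ‖x‖ ^ i.1 * ‖iteratedFDeriv ℝ i.2 g x‖ * R ^ M
        ≤ ‖x‖ ^ i.1 * ‖iteratedFDeriv ℝ i.2 g x‖ * (2 * ‖x‖) ^ M := by gcongr
      _ = 2 ^ M * (‖x‖ ^ (i.1 + M) * ‖iteratedFDeriv ℝ i.2 g x‖) := by
          rw [mul_pow, pow_add]; ring
      _ ≤ S i := mul_le_mul_of_nonneg_left hL (by positivity)

/-! ### Tensor products of Schwartz functions -/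

/-- The tensor product `(t, x) ↦ f t * b x` of Schwartz functions on `ℝ` and `ℝ^q`, as a continuous
linear map in the first factor. -/
def tens {q : ℕ} (b : 𝓢(Vec q, ℂ)) : 𝓢(ℝ, ℂ) →L[ℂ] 𝓢(Vec (q + 1), ℂ) :=
  SchwartzMap.mkCLM (fun f y => f (y 0) * b (Fin.tail y))
    (fun f g y => by simp [add_mul]) (fun a f y => by simp [mul_assoc])
    (fun f => ((f.smooth ⊤).comp (contDiff_apply ℝ ℝ 0)).mul
      ((b.smooth ⊤).comp (contDiff_pi.mpr fun i => contDiff_apply ℝ ℝ i.succ))) <| by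
    rintro ⟨k, n⟩
    let P : Vec (q + 1) →L[ℝ] ℝ := ContinuousLinearMap.proj 0
    let T : Vec (q + 1) →L[ℝ] Vec q :=
      ContinuousLinearMap.pi fun i => ContinuousLinearMap.proj i.succ
    have hP : ‖P‖ ≤ 1 := ContinuousLinearMap.opNorm_le_bound _ zero_le_one fun y => by
      rw [one_mul]; exact norm_le_pi_norm y 0
    have hT : ‖T‖ ≤ 1 := ContinuousLinearMap.opNorm_le_bound _ zero_le_one fun y => by
      rw [one_mul]
      exact (pi_norm_le_iff_of_nonneg (norm_nonneg _)).mpr fun i => norm_le_pi_norm y i.succ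
    have hPf : ∀ (f : 𝓢(ℝ, ℂ)) (i : ℕ) (y : Vec (q + 1)),
        ‖iteratedFDeriv ℝ i (fun y => f (P y)) y‖ ≤ ‖iteratedFDeriv ℝ i f (P y)‖ := fun f i y =>
      (norm_iteratedFDeriv_comp_clm_le P f (f.smooth ⊤) i y).trans
        (mul_le_of_le_one_left (norm_nonneg _) (pow_le_one₀ (norm_nonneg _) hP))
    have hTb : ∀ (i : ℕ) (y : Vec (q + 1)),
        ‖iteratedFDeriv ℝ i (fun y => b (T y)) y‖ ≤ ‖iteratedFDeriv ℝ i b (T y)‖ := fun i y =>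
      (norm_iteratedFDeriv_comp_clm_le T b (b.smooth ⊤) i y).trans
        (mul_le_of_le_one_left (norm_nonneg _) (pow_le_one₀ (norm_nonneg _) hT))
    let β : ℕ → ℕ → ℝ := fun k i => SchwartzMap.seminorm ℂ k i b
    have hβ : ∀ k i, 0 ≤ β k i := fun k i => apply_nonneg _ _
    refine ⟨Finset.Iic (k, n), ∑ i ∈ Finset.range (n + 1),
      (n.choose i : ℝ) * (β 0 (n - i) + β k (n - i)),
      Finset.sum_nonneg fun i _ => mul_nonneg (Nat.cast_nonneg _) (add_nonneg (hβ _ _) (hβ _ _)),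
      fun f y => ?_⟩
    set S := (Finset.Iic (k, n)).sup (schwartzSeminormFamily ℂ ℝ ℂ) f with hS
    have hfS : ∀ k' ≤ k, ∀ i ≤ n, |y 0| ^ k' * ‖iteratedFDeriv ℝ i f (y 0)‖ ≤ S := by
      intro k' hk i hi
      refine (SchwartzMap.le_seminorm ℂ k' i f (y 0)).trans ?_
      have : schwartzSeminormFamily ℂ ℝ ℂ (k', i) ≤
          (Finset.Iic (k, n)).sup (schwartzSeminormFamily ℂ ℝ ℂ) :=
        Finset.le_sup (f := schwartzSeminormFamily ℂ ℝ ℂ) (by simp [hi, hk])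
      exact this f
    have hy : ‖y‖ ^ k ≤ |y 0| ^ k + ‖T y‖ ^ k := by
      have : ‖y‖ ≤ max |y 0| ‖T y‖ := by
        refine (pi_norm_le_iff_of_nonneg (by positivity)).mpr fun i => ?_
        refine Fin.cases (le_max_left _ _) (fun j => ?_) i
        exact (norm_le_pi_norm (T y) j).trans (le_max_right _ _)
      rcases max_choice |y 0| ‖T y‖ with h | h <;> rw [h] at this
      · exact (pow_le_pow_left₀ (norm_nonneg _) this k).trans
          (le_add_of_nonneg_right (by positivity))
      · exact (pow_le_pow_left₀ (norm_nonneg _) this k).trans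
          (le_add_of_nonneg_left (by positivity))
    have hfP : ContDiff ℝ ∞ fun y => f (P y) := (f.smooth ⊤).comp P.contDiff
    have hbT : ContDiff ℝ ∞ fun y => b (T y) := (b.smooth ⊤).comp T.contDiff
    have key := norm_iteratedFDeriv_mul_le (n := n) hfP hbT y (by exact_mod_cast le_top)
    change ‖y‖ ^ k * ‖iteratedFDeriv ℝ n (fun y => f (P y) * b (T y)) y‖ ≤ _
    refine (mul_le_mul_of_nonneg_left key (by positivity)).trans ?_
    rw [Finset.mul_sum, Finset.sum_mul]
    refine Finset.sum_le_sum fun i hi => ?_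
    have hi' : i ≤ n := Nat.lt_succ_iff.mp (Finset.mem_range.mp hi)
    set A := ‖iteratedFDeriv ℝ i f (y 0)‖ with hA
    set D := ‖iteratedFDeriv ℝ (n - i) b (T y)‖ with hD
    have e1 : |y 0| ^ k * A ≤ S := hfS k le_rfl i hi'
    have e2 : A ≤ S := by simpa using hfS 0 (Nat.zero_le _) i hi'
    have e3 : D ≤ β 0 (n - i) := by simpa using SchwartzMap.le_seminorm ℂ 0 (n - i) b (T y)
    have e4 : ‖T y‖ ^ k * D ≤ β k (n - i) := SchwartzMap.le_seminorm ℂ k (n - i) b (T y)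
    have hS0 : 0 ≤ S := apply_nonneg _ _
    calc ‖y‖ ^ k * ((n.choose i : ℝ) * ‖iteratedFDeriv ℝ i (fun y => f (P y)) y‖ *
            ‖iteratedFDeriv ℝ (n - i) (fun y => b (T y)) y‖)
        ≤ (|y 0| ^ k + ‖T y‖ ^ k) * ((n.choose i : ℝ) * A * D) := by
          have := hPf f i y
          have := hTb (n - i) y
          gcongr
          exact hPf f i y
      _ = (n.choose i : ℝ) * ((|y 0| ^ k * A) * D + A * (‖T y‖ ^ k * D)) := by ring
      _ ≤ (n.choose i : ℝ) * (S * β 0 (n - i) + S * β k (n - i)) := by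
          have := hβ k (n - i)
          gcongr
      _ = _ := by ring

theorem tens_apply {q : ℕ} (b : 𝓢(Vec q, ℂ)) (f : 𝓢(ℝ, ℂ)) (y : Vec (q + 1)) :
    tens b f y = f (y 0) * b (Fin.tail y) := rfl

theorem tsupport_tens_subset {q : ℕ} (b : 𝓢(Vec q, ℂ)) (f : 𝓢(ℝ, ℂ)) :
    tsupport (tens b f) ⊆ {y | y 0 ∈ tsupport f ∧ Fin.tail y ∈ tsupport b} := by
  have ht : Continuous (Fin.tail : Vec (q + 1) → Vec q) :=
    continuous_pi fun i => continuous_apply i.succ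
  have h0 : Continuous fun y : Vec (q + 1) => y 0 := continuous_apply 0
  refine closure_minimal (fun y hy => ?_)
    (((isClosed_tsupport f).preimage h0).inter ((isClosed_tsupport b).preimage ht))
  rw [Function.mem_support, tens_apply] at hy
  exact ⟨subset_tsupport _ (left_ne_zero_of_mul hy), subset_tsupport _ (right_ne_zero_of_mul hy)⟩

theorem hasCompactSupport_tens {q : ℕ} {b : 𝓢(Vec q, ℂ)} {f : 𝓢(ℝ, ℂ)}
    (hb : HasCompactSupport b) (hf : HasCompactSupport f) : HasCompactSupport (tens b f) := by
  have hc : Continuous fun z : ℝ × Vec q => (Fin.cons z.1 z.2 : Vec (q + 1)) :=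
    continuous_pi fun i => Fin.cases (by simpa using continuous_fst)
      (fun j => by
      simp only [Fin.cons_succ]
      exact (continuous_apply j).comp continuous_snd) i
  refine HasCompactSupport.of_support_subset_isCompact
    ((IsCompact.prod hf hb).image hc) fun y hy => ?_
  have := tsupport_tens_subset b f (subset_tsupport _ hy)
  exact ⟨(y 0, Fin.tail y), ⟨this.1, this.2⟩, Fin.cons_self_tail y⟩

/-! ### The Fourier transform in the time variable -/

/-- The Fourier transform `f ↦ ∫ t, exp (-i t s) f t` on Schwartz functions on `ℝ`, in the
normalisation of `partialFourierIntegral`; Mathlib's `𝓕` has frequencies in units of `2π`. -/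
def timeFourier : 𝓢(ℝ, ℂ) →L[ℂ] 𝓢(ℝ, ℂ) :=
  (SchwartzMap.compCLMOfContinuousLinearEquiv ℂ
    (ContinuousLinearEquiv.unitsEquivAut ℝ
      (Units.mk0 (2 * Real.pi)⁻¹ (inv_ne_zero Real.two_pi_pos.ne')))).comp
    (FourierTransform.fourierCLM ℂ 𝓢(ℝ, ℂ))

theorem timeFourier_eq_fourier (f : 𝓢(ℝ, ℂ)) (s : ℝ) :
    timeFourier f s = (𝓕 f : 𝓢(ℝ, ℂ)) (s * (2 * Real.pi)⁻¹) := rfl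

theorem timeFourier_apply (f : 𝓢(ℝ, ℂ)) (s : ℝ) :
    timeFourier f s = ∫ t : ℝ, Complex.exp (-Complex.I * ((t * s : ℝ) : ℂ)) * f t := by
  rw [timeFourier_eq_fourier, SchwartzMap.fourier_coe, Real.fourier_real_eq_integral_exp_smul]
  congr 1
  funext t
  rw [smul_eq_mul]
  congr 2
  have : (Real.pi : ℂ) ≠ 0 := by exact_mod_cast Real.pi_ne_zero
  push_cast
  field_simp

theorem timeFourier_surjective : Function.Surjective timeFourier := by
  intro a
  let g : 𝓢(ℝ, ℂ) := SchwartzMap.compCLMOfContinuousLinearEquiv ℂ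
    (ContinuousLinearEquiv.unitsEquivAut ℝ
      (Units.mk0 (2 * Real.pi) Real.two_pi_pos.ne')) a
  refine ⟨𝓕⁻ g, ?_⟩
  ext s
  rw [timeFourier_eq_fourier, FourierTransform.fourier_fourierInv_eq]
  change a (s * (2 * Real.pi)⁻¹ * (2 * Real.pi)) = a s
  rw [inv_mul_cancel_right₀ (ne_of_gt Real.two_pi_pos)]

/-- Translation by `κ` becomes multiplication by `exp (-i κ s)`. -/
theorem timeFourier_translate (f : 𝓢(ℝ, ℂ)) (κ s : ℝ) :
    timeFourier (SchwartzMap.compSubConstCLM ℂ κ f) s =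
      Complex.exp (-Complex.I * ((s * κ : ℝ) : ℂ)) * timeFourier f s := by
  rw [timeFourier_apply, timeFourier_apply, ← integral_const_mul,
    ← integral_add_right_eq_self _ κ]
  congr 1
  funext t
  rw [SchwartzMap.compSubConstCLM_apply, add_sub_cancel_right, ← mul_assoc, ← Complex.exp_add]
  congr 2
  push_cast
  ring

theorem partialFourierIntegral_tens {q : ℕ} (b : 𝓢(Vec q, ℂ)) (f : 𝓢(ℝ, ℂ)) (y : Vec (q + 1)) :
    partialFourierIntegral (tens b f) y = tens b (timeFourier f) y := by
  have ht : ∀ t : ℝ, Fin.tail (Function.update y 0 t) = Fin.tail y := fun t => by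
    funext i; simp [Fin.tail]
  rw [tens_apply, timeFourier_apply, partialFourierIntegral, ← integral_mul_const]
  congr 1
  funext t
  rw [tens_apply, ht, Function.update_self, mul_assoc]

/-- Modulating a tensor product translates the frequencies of its first factor. -/
theorem modulate_tens_timeFourier {q : ℕ} (k : Vec (q + 1)) (b : 𝓢(Vec q, ℂ)) (f : 𝓢(ℝ, ℂ)) :
    modulate k (tens b (timeFourier f)) =
      tens (modulate (Fin.tail k) b)
        (timeFourier (SchwartzMap.compSubConstCLM ℂ (k 0) f)) := by
  ext y
  rw [modulate_apply, tens_apply, tens_apply, timeFourier_translate, modulate_apply, wave, wave,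
    Fin.sum_univ_succ]
  have : (-Complex.I * ((y 0 * k 0 + ∑ i : Fin q, y i.succ * k i.succ : ℝ) : ℂ)) =
      -Complex.I * ((y 0 * k 0 : ℝ) : ℂ) +
        -Complex.I * ((∑ i : Fin q, y i.succ * k i.succ : ℝ) : ℂ) := by push_cast; ring
  rw [this, Complex.exp_add]
  simp only [Fin.tail]
  ring

/-! ### From local to global vanishing -/

/-- A compactly supported Schwartz function supported in `V ∪ V'` is a sum of two such functions,
supported in `V` and in `V'`. -/
theorem exists_split {E : Type*} [NormedAddCommGroup E] [NormedSpace ℝ E] [FiniteDimensional ℝ E]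
    {V V' : Set E} (hV : IsOpen V) (hV' : IsOpen V') (b : 𝓢(E, ℂ)) (hb : HasCompactSupport b)
    (hbV : tsupport b ⊆ V ∪ V') :
    ∃ b₁ b₂ : 𝓢(E, ℂ), b = b₁ + b₂ ∧ HasCompactSupport b₁ ∧ tsupport b₁ ⊆ V ∧
      HasCompactSupport b₂ ∧ tsupport b₂ ⊆ V' := by
  obtain ⟨χ, h0, h1, -⟩ := exists_contMDiffMap_zero_one_nhds_of_isClosed (n := ⊤)
    (modelWithCornersSelf ℝ E) hV.isClosed_compl ((isClosed_tsupport b).sdiff hV')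
    (Set.disjoint_left.mpr fun x hx hx' => (hbV hx'.1).elim hx hx'.2)
  have hχ : ContDiff ℝ ∞ fun x => (χ x : ℂ) :=
    Complex.ofRealCLM.contDiff.comp χ.contMDiff.contDiff
  have hcs : HasCompactSupport fun x => (χ x : ℂ) * b x := hb.mul_left
  let b₁ : 𝓢(E, ℂ) := hcs.toSchwartzMap (hχ.mul (b.smooth ⊤))
  have hb₁ : ∀ x, b₁ x = (χ x : ℂ) * b x := fun x => rfl
  have hb₂ : ∀ x, (b - b₁) x = (1 - (χ x : ℂ)) * b x := fun x => by
    rw [sub_apply, hb₁]; ring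
  have hs₂ : tsupport (b - b₁ : 𝓢(E, ℂ)) ⊆ tsupport b :=
    closure_mono fun x hx => by
      rw [Function.mem_support, hb₂] at hx
      exact right_ne_zero_of_mul hx
  refine ⟨b₁, b - b₁, by abel, hcs, fun x hx => ?_,
    hb.of_isClosed_subset (isClosed_tsupport _) hs₂, fun x hx => ?_⟩
  · by_contra hxV
    have hev : ∀ᶠ y in nhds x, χ y = 0 := h0.filter_mono (nhds_le_nhdsSet hxV)
    refine (notMem_tsupport_iff_eventuallyEq.mpr ?_) hx
    filter_upwards [hev] with y hy
    simp [hb₁, hy]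
  · by_contra hxV
    have hev : ∀ᶠ y in nhds x, χ y = 1 := by
      have hm : x ∈ tsupport b \ V' := ⟨hs₂ hx, hxV⟩
      exact h1.filter_mono (nhds_le_nhdsSet hm)
    refine (notMem_tsupport_iff_eventuallyEq.mpr ?_) hx
    filter_upwards [hev] with y hy
    simp [hb₂, hy]

/-- If a family of additive functionals on test functions vanishes, eventually along `l`, near each
point of a compact set, then it vanishes eventually on a neighbourhood of that set. -/
theorem eventually_vanish {E ι : Type*} [NormedAddCommGroup E] [NormedSpace ℝ E]
    [FiniteDimensional ℝ E] (l : Filter ι) (L : ι → 𝓢(E, ℂ) → ℂ)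
    (hL : ∀ i b b', L i (b + b') = L i b + L i b') {K : Set E} (hK : IsCompact K)
    (h : ∀ x ∈ K, ∃ V : Set E, IsOpen V ∧ x ∈ V ∧ ∀ᶠ i in l, ∀ b : 𝓢(E, ℂ),
      HasCompactSupport b → tsupport b ⊆ V → L i b = 0) :
    ∃ V : Set E, IsOpen V ∧ K ⊆ V ∧ ∀ᶠ i in l, ∀ b : 𝓢(E, ℂ),
      HasCompactSupport b → tsupport b ⊆ V → L i b = 0 := by
  refine hK.induction_on (p := fun S => ∃ V : Set E, IsOpen V ∧ S ⊆ V ∧ ∀ᶠ i in l,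
    ∀ b : 𝓢(E, ℂ), HasCompactSupport b → tsupport b ⊆ V → L i b = 0) ?_ ?_ ?_ ?_
  · refine ⟨∅, isOpen_empty, subset_rfl, Filter.Eventually.of_forall fun i b _ hb => ?_⟩
    have hb0 : b = 0 := by
      ext x
      have := Function.support_eq_empty_iff.mp
        (Set.subset_empty_iff.mp ((subset_tsupport (b : E → ℂ)).trans hb))
      rw [this]; rfl
    have := hL i 0 0
    rw [add_zero] at this
    rw [hb0]
    exact left_eq_add.mp this
  · rintro S T hST ⟨V, hV, hTV, hv⟩
    exact ⟨V, hV, hST.trans hTV, hv⟩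
  · rintro S T ⟨V, hV, hSV, hv⟩ ⟨V', hV', hTV', hv'⟩
    refine ⟨V ∪ V', hV.union hV', Set.union_subset_union hSV hTV', ?_⟩
    filter_upwards [hv, hv'] with i hi hi' b hb hbV
    obtain ⟨b₁, b₂, rfl, h1, h1V, h2, h2V⟩ := exists_split hV hV' b hb hbV
    rw [hL, hi b₁ h1 h1V, hi' b₂ h2 h2V, add_zero]
  · intro x hx
    obtain ⟨V, hV, hxV, hv⟩ := h x hx
    exact ⟨V, mem_nhdsWithin_of_mem_nhds (hV.mem_nhds hxV), V, hV, subset_rfl, hv⟩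

/-- If the support of the partial Fourier transform of `u` misses `W × ℝ^q`, then `u` annihilates
the partial Fourier transforms of tensor products whose time factor is supported in `W`. The
localisation is done one factor at a time: in space for a time support shrinking to a point, then
in time. -/
theorem vanish_of_pfSupport {q : ℕ} (u : TD (q + 1)) (W : Set ℝ)
    (hu : ∀ y ∈ pfSupport u, y 0 ∉ W) (f : 𝓢(ℝ, ℂ)) (hf : HasCompactSupport f)
    (hfW : tsupport f ⊆ W) (b : 𝓢(Vec q, ℂ)) (hb : HasCompactSupport b) :
    u (tens b (timeFourier f)) = 0 := by
  have hcons : Continuous fun z : ℝ × Vec q => (Fin.cons z.1 z.2 : Vec (q + 1)) :=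
    continuous_pi fun i => Fin.cases (by simpa using continuous_fst)
      (fun j => by
        simp only [Fin.cons_succ]
        exact (continuous_apply j).comp continuous_snd) i
  have htime := eventually_vanish (pure ()) (fun _ f => u (tens b (timeFourier f)))
    (fun _ f f' => by simp only [map_add]) hf fun t ht => by
      have hspace := eventually_vanish
        (Filter.comap (fun f : 𝓢(ℝ, ℂ) => tsupport f) (nhds t).smallSets ⊓
          Filter.principal {f : 𝓢(ℝ, ℂ) | HasCompactSupport f})
        (fun f (b : 𝓢(Vec q, ℂ)) => u (tens b (timeFourier f)))
        (fun f b b' => by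
          rw [← map_add]; congr 1; ext y; simp [tens_apply, mul_add]) hb fun x _ => by
          have hy : (Fin.cons t x : Vec (q + 1)) ∉ pfSupport u := fun hy =>
            hu _ hy (by simpa using hfW ht)
          obtain ⟨U, hU, hyU, hvan⟩ := not_not.mp hy
          have hn : (fun z : ℝ × Vec q => (Fin.cons z.1 z.2 : Vec (q + 1))) ⁻¹' U ∈ nhds (t, x) :=
            (hU.preimage hcons).mem_nhds hyU
          obtain ⟨I, hI, J, hJ, hIJ⟩ := mem_nhds_prod_iff.mp hn
          refine ⟨interior J, isOpen_interior, mem_interior_iff_mem_nhds.mpr hJ, ?_⟩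
          rw [Filter.eventually_inf_principal, Filter.eventually_comap,
            Filter.eventually_smallSets]
          refine ⟨I, hI, ?_⟩
          rintro _ hs f' rfl hf' b' hb' hbJ
          refine hvan (tens b' f') _ (hasCompactSupport_tens hb' hf') (fun y hy => ?_)
            fun y => (partialFourierIntegral_tens b' f' y).symm
          have := tsupport_tens_subset b' f' hy
          have hm : (y 0, Fin.tail y) ∈ I ×ˢ J := ⟨hs this.1, interior_subset (hbJ this.2)⟩
          simpa using hIJ hm
      obtain ⟨V, -, hbV, hv⟩ := hspace
      rw [Filter.eventually_inf_principal, Filter.eventually_comap,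
        Filter.eventually_smallSets] at hv
      obtain ⟨I, hI, hv⟩ := hv
      refine ⟨interior I, isOpen_interior, mem_interior_iff_mem_nhds.mpr hI, ?_⟩
      refine Filter.eventually_pure.mpr fun f' hf' hfI => ?_
      exact hv _ (hfI.trans interior_subset) f' rfl hf' b hb hbV
  obtain ⟨V, -, hKV, hv⟩ := htime
  exact Filter.eventually_pure.mp hv f hf hKV

/-! ### Seminorm estimates and cutoffs -/

/-- Continuity of a linear map between Schwartz spaces, in terms of the standard seminorms. -/
theorem exists_clm_bound {E F : Type*} [NormedAddCommGroup E] [NormedSpace ℝ E]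
    [NormedAddCommGroup F] [NormedSpace ℝ F] (T : 𝓢(E, ℂ) →L[ℂ] 𝓢(F, ℂ)) (t : Finset (ℕ × ℕ)) :
    ∃ (s : Finset (ℕ × ℕ)) (C : ℝ), 0 ≤ C ∧ ∀ g,
      t.sup (schwartzSeminormFamily ℂ F ℂ) (T g) ≤ C * s.sup (schwartzSeminormFamily ℂ E ℂ) g := by
  have hc : Continuous ((t.sup (schwartzSeminormFamily ℂ F ℂ)).comp T.toLinearMap) :=
    ((schwartz_withSeminorms ℂ F ℂ).finset_sups.continuous_seminorm t).comp T.continuous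
  obtain ⟨s, C, -, h⟩ := Seminorm.bound_of_continuous (schwartz_withSeminorms ℂ E ℂ) _ hc
  exact ⟨s, C, C.2, fun g => h g⟩

/-- A tempered distribution is bounded by finitely many Schwartz seminorms. -/
theorem exists_functional_bound {E : Type*} [NormedAddCommGroup E] [NormedSpace ℝ E]
    (u : 𝓢(E, ℂ) →L[ℂ] ℂ) :
    ∃ (s : Finset (ℕ × ℕ)) (C : ℝ), 0 ≤ C ∧ ∀ g,
      ‖u g‖ ≤ C * s.sup (schwartzSeminormFamily ℂ E ℂ) g := by
  have hc : Continuous ((normSeminorm ℂ ℂ).comp u.toLinearMap) :=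
    continuous_norm.comp u.continuous
  obtain ⟨s, C, -, h⟩ := Seminorm.bound_of_continuous (schwartz_withSeminorms ℂ E ℂ) _ hc
  exact ⟨s, C, C.2, fun g => h g⟩

theorem exists_schwartz_bump {E : Type*} [NormedAddCommGroup E] [NormedSpace ℝ E]
    [FiniteDimensional ℝ E] (x : E) : ∃ f : 𝓢(E, ℂ), HasCompactSupport f ∧ f x ≠ 0 := by
  let c : ContDiffBump x := ⟨1, 2, one_pos, one_lt_two⟩
  have hs : ContDiff ℝ ∞ fun y => (c y : ℂ) := Complex.ofRealCLM.contDiff.comp c.contDiff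
  have hc : HasCompactSupport fun y => (c y : ℂ) :=
    c.hasCompactSupport.comp_left (g := Complex.ofReal) Complex.ofReal_zero
  refine ⟨hc.toSchwartzMap hs, hc, ?_⟩
  change ((c x : ℝ) : ℂ) ≠ 0
  rw [c.one_of_mem_closedBall (Metric.mem_closedBall_self zero_le_one)]
  simp

theorem exists_unit_cutoff : ∃ η : 𝓢(ℝ, ℂ), (∀ x, 1 < |x| → η x = 0) ∧
    ∀ x, |x| < 1 / 2 → η x = 1 := by
  let c : ContDiffBump (0 : ℝ) := ⟨1 / 2, 1, by norm_num, by norm_num⟩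
  have hs : ContDiff ℝ ∞ fun y => (c y : ℂ) := Complex.ofRealCLM.contDiff.comp c.contDiff
  have hc : HasCompactSupport fun y => (c y : ℂ) :=
    c.hasCompactSupport.comp_left (g := Complex.ofReal) Complex.ofReal_zero
  refine ⟨hc.toSchwartzMap hs, fun x hx => ?_, fun x hx => ?_⟩
  · change ((c x : ℝ) : ℂ) = 0
    rw [c.zero_of_le_dist (by simpa using hx.le), Complex.ofReal_zero]
  · change ((c x : ℝ) : ℂ) = 1
    rw [c.one_of_mem_closedBall (by rw [mem_closedBall_zero_iff]; exact hx.le), Complex.ofReal_one]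

theorem exists_bound_one_sub (η : 𝓢(ℝ, ℂ)) (n : ℕ) :
    ∃ B, ∀ x, ‖iteratedFDeriv ℝ n (fun x => 1 - η x) x‖ ≤ B := by
  refine ⟨1 + SchwartzMap.seminorm ℂ 0 n η, fun x => ?_⟩
  have hη := SchwartzMap.norm_iteratedFDeriv_le_seminorm ℂ η n x
  rw [fun_iteratedFDeriv_sub_apply contDiffAt_const ((η.smooth n).contDiffAt)]
  refine (norm_sub_le _ _).trans (add_le_add ?_ hη)
  rcases Nat.eq_zero_or_pos n with rfl | hn
  · simp
  · rw [iteratedFDeriv_const_of_ne hn.ne']; simp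

/-! ### Rapid decay -/

/-- If the time frequencies of `u` avoid `W`, and `W` contains the interval of radius `|s|/2`
around every large `s` of the sign of `k₀ 0`, then `(x₀, k₀)` is a regular directed point of
`u`. -/
theorem regular_of_window {q : ℕ} (u : TD (q + 1)) (W : Set ℝ)
    (hu : ∀ y ∈ pfSupport u, y 0 ∉ W) (x₀ k₀ : Vec (q + 1)) (hk : k₀ 0 ≠ 0) (K : ℝ)
    (hK : ∀ s, 0 < s * k₀ 0 → K ≤ |s| → Metric.closedBall s (|s| / 2) ⊆ W) :
    IsRegularDirectedPoint u x₀ k₀ := by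
  obtain ⟨a, ha, hax⟩ := exists_schwartz_bump (x₀ 0)
  obtain ⟨f, rfl⟩ := timeFourier_surjective a
  obtain ⟨b, hb, hbx⟩ := exists_schwartz_bump (Fin.tail x₀)
  obtain ⟨η, hη0, hη1⟩ := exists_unit_cutoff
  obtain ⟨su, Cu, hCu, hub⟩ := exists_functional_bound u
  obtain ⟨t, N, Cm, hCm, hmb⟩ := exists_modulate_bound (p := q + 1) su
  obtain ⟨s', Ct, hCt, htb⟩ := exists_clm_bound ((tens b).comp timeFourier) t
  have hk0 : 0 < |k₀ 0| := abs_pos.mpr hk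
  -- On the cone `Γ` below, `|k 0|` controls `‖k‖`.
  set c : ℝ := (‖k₀‖ + 1) / |k₀ 0| with hc
  have hc0 : 0 < c := by positivity
  set D : ℝ := c * max K 2 with hD
  have hD0 : 0 < D := mul_pos hc0 (lt_max_of_lt_right two_pos)
  refine ⟨tens b (timeFourier f), hasCompactSupport_tens hb ha, mul_ne_zero hax hbx,
    {k | 0 < k 0 * k₀ 0 ∧ ‖k‖ < c * |k 0|}, ⟨?_, ⟨?_, ?_⟩, ?_⟩, fun n => ?_⟩
  · have h0 : Continuous fun k : Vec (q + 1) => k 0 := continuous_apply 0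
    exact (isOpen_lt continuous_const (h0.mul continuous_const)).inter
      (isOpen_lt continuous_norm (continuous_const.mul h0.abs))
  · exact mul_self_pos.mpr hk
  · rw [hc, div_mul_cancel₀ _ hk0.ne']; linarith
  · rintro k ⟨h1, h2⟩ r hr
    refine ⟨?_, ?_⟩
    · have : (r • k) 0 * k₀ 0 = r * (k 0 * k₀ 0) := by
        rw [Pi.smul_apply, smul_eq_mul, mul_assoc]
      rw [this]; positivity
    · rw [norm_smul, Pi.smul_apply, smul_eq_mul, abs_mul, Real.norm_eq_abs]
      calc |r| * ‖k‖ < |r| * (c * |k 0|) := mul_lt_mul_of_pos_left h2 (abs_pos.mpr hr.ne')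
        _ = c * (|r| * |k 0|) := by ring
  obtain ⟨Cg, hCg, hgb⟩ := exists_cutoff_bound (fun x => 1 - η x)
    (contDiff_const.sub (η.smooth ⊤)) (fun x hx => by simp [hη1 x hx]) (exists_bound_one_sub η)
    f s' (N + n)
  have hest : ∀ (k : Vec (q + 1)) (g : 𝓢(Vec (q + 1), ℂ)),
      ‖u (modulate k g)‖ * (1 + ‖k‖) ^ n ≤
        Cu * Cm * ((1 + ‖k‖) ^ (N + n) * t.sup (schwartzSeminormFamily ℂ (Vec (q + 1)) ℂ) g) :=
    fun k g => by
      calc ‖u (modulate k g)‖ * (1 + ‖k‖) ^ n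
          ≤ Cu * (Cm * (1 + ‖k‖) ^ N * t.sup (schwartzSeminormFamily ℂ (Vec (q + 1)) ℂ) g) *
            (1 + ‖k‖) ^ n := by
            gcongr
            exact (hub _).trans (mul_le_mul_of_nonneg_left (hmb k g) hCu)
        _ = _ := by rw [pow_add]; ring
  set P : ℝ := t.sup (schwartzSeminormFamily ℂ (Vec (q + 1)) ℂ) (tens b (timeFourier f)) with hP
  have hP0 : 0 ≤ P := apply_nonneg _ _
  refine ⟨Cu * Cm * ((1 + D) ^ (N + n) * P) + Cu * Cm * ((1 + 2 * c) ^ (N + n) * (Ct * Cg)),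
    ?_⟩
  rintro k ⟨hkk, hkc⟩ ψ hψ
  have hψe : ψ = modulate k (tens b (timeFourier f)) := by
    ext x
    rw [hψ, modulate_apply, mul_comm]; rfl
  rw [hψe, zpow_neg, zpow_natCast, ← div_eq_mul_inv, le_div_iff₀ (by positivity)]
  rcases lt_or_ge |k 0| (max K 2) with hlt | hge
  · have hkD : ‖k‖ ≤ D := hkc.le.trans (mul_le_mul_of_nonneg_left hlt.le hc0.le)
    refine le_add_of_le_of_nonneg ((hest k _).trans ?_) (by positivity)
    gcongr
  · set R : ℝ := |k 0| / 2 with hR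
    have hR1 : 1 ≤ R := by
      have := (le_max_right K 2).trans hge
      linarith
    have hR0 : 0 < R := one_pos.trans_le hR1
    have hsc : ContDiff ℝ ∞ fun x : ℝ => η (R⁻¹ * x) * f x :=
      ((η.smooth ⊤).comp (contDiff_const.mul contDiff_id)).mul (f.smooth ⊤)
    have hsupp : Function.support (fun x : ℝ => η (R⁻¹ * x) * f x) ⊆ Metric.closedBall 0 R := by
      intro x hx
      rw [mem_closedBall_zero_iff, Real.norm_eq_abs]
      by_contra hxR
      refine hx ?_
      have : 1 < |R⁻¹ * x| := by
        rw [abs_mul, abs_of_pos (inv_pos.mpr hR0), inv_mul_eq_div, lt_div_iff₀ hR0]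
        linarith
      simp [hη0 _ this]
    have hcs : HasCompactSupport fun x : ℝ => η (R⁻¹ * x) * f x :=
      HasCompactSupport.of_support_subset_isCompact (isCompact_closedBall 0 R) hsupp
    let h : 𝓢(ℝ, ℂ) := hcs.toSchwartzMap hsc
    have hg : ∀ x, (f - h) x = (1 - η (R⁻¹ * x)) * f x := fun x => by
      rw [sub_apply]
      change f x - η (R⁻¹ * x) * f x = _
      ring
    -- After modulation, the part of frequency at most `R` lives in the window around `k 0`.
    have htr : tsupport (SchwartzMap.compSubConstCLM ℂ (k 0) h) ⊆ Metric.closedBall (k 0) R :=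
      closure_minimal (fun x hx => by
        have hx' : x - k 0 ∈ Function.support (fun x : ℝ => η (R⁻¹ * x) * f x) := hx
        have := hsupp hx'
        rwa [mem_closedBall_zero_iff, ← dist_eq_norm] at this) Metric.isClosed_closedBall
    have hzero : u (modulate k (tens b (timeFourier h))) = 0 := by
      rw [modulate_tens_timeFourier]
      refine vanish_of_pfSupport u W hu _
        ((isCompact_closedBall (k 0) R).of_isClosed_subset (isClosed_tsupport _) htr)
        (htr.trans (hK _ hkk ((le_max_left _ _).trans hge))) _ ?_
      refine hb.mono fun x hx => ?_
      rw [Function.mem_support, modulate_apply] at hx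
      exact right_ne_zero_of_mul hx
    have hsplit : u (modulate k (tens b (timeFourier f))) =
        u (modulate k (tens b (timeFourier (f - h)))) := by
      rw [map_sub, map_sub, map_sub, map_sub, hzero, sub_zero]
    have hkR : 1 + ‖k‖ ≤ (1 + 2 * c) * R := by
      have : |k 0| = 2 * R := by rw [hR]; ring
      rw [this] at hkc
      nlinarith
    rw [hsplit]
    refine le_add_of_nonneg_of_le (by positivity) ((hest k _).trans ?_)
    refine mul_le_mul_of_nonneg_left ?_ (by positivity)
    calc (1 + ‖k‖) ^ (N + n) * t.sup (schwartzSeminormFamily ℂ (Vec (q + 1)) ℂ)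
          (tens b (timeFourier (f - h)))
        ≤ ((1 + 2 * c) * R) ^ (N + n) *
          (Ct * s'.sup (schwartzSeminormFamily ℂ ℝ ℂ) (f - h)) := by
          gcongr
          exact htb (f - h)
      _ = (1 + 2 * c) ^ (N + n) *
          (Ct * (R ^ (N + n) * s'.sup (schwartzSeminormFamily ℂ ℝ ℂ) (f - h))) := by
          rw [mul_pow]; ring
      _ ≤ (1 + 2 * c) ^ (N + n) * (Ct * Cg) := by
          gcongr
          exact hgb R hR1 (f - h) hg

/-- If the partial Fourier transform (in the time variable) of the tempered
distribution `u` on `ℝ^{1+q}` has support in `[α,∞) × ℝ^q` (resp. `(-∞,β] × ℝ^q`), then the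
wave front set of `u` is contained in `K⁺ ∪ K⁰` (resp. `K⁻ ∪ K⁰`), i.e. every point of the
wave front set has nonnegative (resp. nonpositive) first covariable component. -/
theorem statement0 (q m : ℕ) (hq : 1 ≤ q) (u : Fin m → TD (q+1)) :
    ((∃ α : ℝ, ∀ i, pfSupport (u i) ⊆ {y : Vec (q+1) | α ≤ y 0}) →
      wfSetVec u ⊆ {z : Vec (q+1) × Vec (q+1) | 0 ≤ z.2 0}) ∧
    ((∃ β : ℝ, ∀ i, pfSupport (u i) ⊆ {y : Vec (q+1) | y 0 ≤ β}) →
      wfSetVec u ⊆ {z : Vec (q+1) × Vec (q+1) | z.2 0 ≤ 0}) := by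
  constructor
  · rintro ⟨α, hα⟩ z hz
    obtain ⟨i, hzi⟩ := Set.mem_iUnion.mp hz
    by_contra hneg
    have hneg : z.2 0 < 0 := not_le.mp hneg
    refine hzi.2 (regular_of_window (u i) (Set.Iio α)
      (fun y hy h => not_lt_of_ge (hα i hy) (Set.mem_Iio.mp h))
      z.1 z.2 hneg.ne (2 * |α| + 1) fun s hs hsK x hx => ?_)
    have hs0 : s < 0 := by nlinarith
    rw [Metric.mem_closedBall, Real.dist_eq, abs_of_neg hs0] at hx
    rw [abs_of_neg hs0] at hsK
    have := (abs_le.mp hx).2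
    have := neg_abs_le α
    change x < α
    linarith
  · rintro ⟨β, hβ⟩ z hz
    obtain ⟨i, hzi⟩ := Set.mem_iUnion.mp hz
    by_contra hpos
    have hpos : 0 < z.2 0 := not_le.mp hpos
    refine hzi.2 (regular_of_window (u i) (Set.Ioi β)
      (fun y hy h => not_lt_of_ge (hβ i hy) (Set.mem_Ioi.mp h))
      z.1 z.2 hpos.ne' (2 * |β| + 1) fun s hs hsK x hx => ?_)
    have hs0 : 0 < s := by nlinarith
    rw [Metric.mem_closedBall, Real.dist_eq, abs_of_pos hs0] at hx
    rw [abs_of_pos hs0] at hsK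
    have := (abs_le.mp hx).1
    have := le_abs_self β
    change β < x
    linarith

end
end

section
/- Let q ≥ 1 and let u be a (scalar or finite-dimensional vector valued) tempered distribution on ℝ^{1+q} = ℝ × ℝ^q. If supp(F₀u) ⊆ [α,∞) × ℝ^q for some α ∈ ℝ, then supp(Fu) ⊆ [α,∞) × ℝ^q, where F denotes the Fourier transform in all 1+q variables. Analogously, if supp(F₀u) ⊆ (−∞,β] × ℝ^q for some β ∈ ℝ, then supp(Fu) ⊆ (−∞,β] × ℝ^q. -/
/-!
The full transform factors as `F = F₀ F'`, where `F'` is the Fourier transform in the last `q`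
variables. `F'` does not move points in the first variable: if a test function `f` is supported in
`{y | y 0 ∉ S}`, then so is `F' f` (`tFI`), although its support is no longer compact. If `F₀u` is
supported in `S × ℝ^q`, one therefore expects `u (F₀ (F' f)) = 0`.

To make up for the missing compactness, `F' f` is multiplied by a cutoff `η(c y')` depending only
on the last variables `y'`. Such a cutoff commutes with `F₀`, so the resulting test functions have
transforms `η(c y') (F f)`, which converge to `F f` in the Schwartz topology as `c → 0`
(`tendsto_cutoff`), and continuity of `u` concludes (`apply_full_eq_zero`).

The support of `F₀u` is defined by local vanishing, and passing to all test functions supported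
off it takes a partition of unity (`apply_pFISchwartz_eq_zero`). This uses that `F₀` maps test
functions to Schwartz functions (`pFISchwartz`): the derivative of `F₀f` is again `F₀` of a
(vector-valued) test function, and integration by parts gives the decay in the first variable.
-/

open MeasureTheory Complex

noncomputable section

open scoped ContDiff Topology

lemma norm_phase (r : ℝ) : ‖Complex.exp (-Complex.I * (r : ℂ))‖ = 1 := by
  simp [Complex.norm_exp]

/-- The projection of `ℝ^{1+q}` onto `{0} × ℝ^q`. -/
def tanProj (q : ℕ) : Vec (q+1) →L[ℝ] Vec (q+1) :=
  ContinuousLinearMap.pi fun i => if i = 0 then 0 else ContinuousLinearMap.proj i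

/-- The unit vector of the first coordinate. -/
def timeVec (q : ℕ) : Vec (q+1) := Pi.single 0 1

lemma update_eq_tanProj {q : ℕ} (y : Vec (q+1)) (t : ℝ) :
    Function.update y 0 t = tanProj q y + t • timeVec q := by
  funext i
  by_cases h : i = 0
  · subst h; simp [tanProj, timeVec]
  · simp [tanProj, timeVec, h]

lemma tanProj_update {q : ℕ} (y : Vec (q+1)) (t : ℝ) :
    tanProj q (Function.update y 0 t) = tanProj q y := by
  funext i
  by_cases h : i = 0
  · subst h; simp [tanProj]
  · simp [tanProj, h]

lemma norm_le_abs_add_tanProj {q : ℕ} (y : Vec (q+1)) : ‖y‖ ≤ |y 0| + ‖tanProj q y‖ := by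
  refine (pi_norm_le_iff_of_nonneg (by positivity)).2 fun i => ?_
  by_cases h : i = 0
  · subst h; simp
  · have : y i = tanProj q y i := by simp [tanProj, h]
    rw [this]
    have := norm_le_pi_norm (tanProj q y) i
    have := abs_nonneg (y 0)
    linarith

lemma norm_tanProj_le {q : ℕ} (y : Vec (q+1)) : ‖tanProj q y‖ ≤ ‖y‖ := by
  refine (pi_norm_le_iff_of_nonneg (by positivity)).2 fun i => ?_
  by_cases h : i = 0
  · subst h; simp [tanProj]
  · simpa [tanProj, h] using norm_le_pi_norm y i

/-! ### The transform in the first variable of a test function is a Schwartz function -/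

lemma exists_zero_outside_ball {q : ℕ} {E : Type} [NormedAddCommGroup E]
    {f : Vec (q+1) → E} (hs : HasCompactSupport f) :
    ∃ R : ℝ, 0 ≤ R ∧ ∀ z, R < ‖z‖ → f z = 0 := by
  obtain ⟨R, hR⟩ := hs.isCompact.isBounded.subset_closedBall 0
  refine ⟨max R 0, le_max_right _ _, fun z hz => ?_⟩
  by_contra h
  have := hR (subset_tsupport f h)
  simp at this
  exact absurd (lt_of_le_of_lt (le_max_left R 0) hz) (not_lt.2 this)

section PartialTransform

variable {q : ℕ} {E : Type} [NormedAddCommGroup E] [NormedSpace ℂ E]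

/-- The Fourier transform in the first variable of a vector-valued function; for scalar functions
it is `partialFourierIntegral`. -/
def pFI (f : Vec (q+1) → E) (y : Vec (q+1)) : E :=
  ∫ t : ℝ, Complex.exp (-Complex.I * ((t * y 0 : ℝ) : ℂ)) • f (Function.update y 0 t)

lemma abs_le_norm_update (y : Vec (q+1)) (t : ℝ) : |t| ≤ ‖Function.update y 0 t‖ := by
  simpa using norm_le_pi_norm (Function.update y 0 t) 0

lemma continuous_integrand {f : Vec (q+1) → E} (hf : Continuous f) (y : Vec (q+1)) :
    Continuous fun t : ℝ =>
      Complex.exp (-Complex.I * ((t * y 0 : ℝ) : ℂ)) • f (Function.update y 0 t) := by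
  simp_rw [update_eq_tanProj]
  fun_prop

/-- An integrable bound for the integrand of `pFI`, independent of the point. -/
lemma exists_bound {f : Vec (q+1) → E} (hf : Continuous f) (hs : HasCompactSupport f) :
    ∃ b : ℝ → ℝ, Integrable b ∧ ∀ (y : Vec (q+1)) (t : ℝ),
      ‖Complex.exp (-Complex.I * ((t * y 0 : ℝ) : ℂ)) • f (Function.update y 0 t)‖ ≤ b t := by
  obtain ⟨R, hR0, hR⟩ := exists_zero_outside_ball hs
  obtain ⟨C, hC⟩ := hf.bounded_above_of_compact_support hs
  refine ⟨(Set.Icc (-R) R).indicator fun _ => C, ?_, fun y t => ?_⟩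
  · rw [integrable_indicator_iff measurableSet_Icc]
    exact integrableOn_const (by simp)
  · rw [norm_smul, norm_phase, one_mul]
    by_cases ht : t ∈ Set.Icc (-R) R
    · simpa [ht] using hC _
    · rw [hR, Set.indicator_of_notMem ht, norm_zero]
      refine lt_of_lt_of_le ?_ (abs_le_norm_update y t)
      exact not_le.1 fun h => ht (abs_le.1 h)

lemma integrable_integrand {f : Vec (q+1) → E} (hf : Continuous f) (hs : HasCompactSupport f)
    (y : Vec (q+1)) : Integrable fun t : ℝ =>
      Complex.exp (-Complex.I * ((t * y 0 : ℝ) : ℂ)) • f (Function.update y 0 t) := by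
  obtain ⟨b, hb, h⟩ := exists_bound hf hs
  exact hb.mono' (continuous_integrand hf y).aestronglyMeasurable (.of_forall (h y))

lemma pFI_bounded {f : Vec (q+1) → E} (hf : Continuous f) (hs : HasCompactSupport f) :
    ∃ C : ℝ, ∀ y, ‖pFI f y‖ ≤ C := by
  obtain ⟨b, hb, h⟩ := exists_bound hf hs
  exact ⟨∫ t, b t, fun y => norm_integral_le_of_norm_le hb (.of_forall (h y))⟩

lemma pFI_eq_zero {f : Vec (q+1) → E} {R : ℝ} (hR : ∀ z, R < ‖z‖ → f z = 0)
    {y : Vec (q+1)} (hy : R < ‖tanProj q y‖) : pFI f y = 0 := by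
  have : ∀ t : ℝ, f (Function.update y 0 t) = 0 := fun t => hR _ <| by
    have := norm_tanProj_le (Function.update y 0 t)
    rw [tanProj_update] at this
    linarith
  simp [pFI, this]

/-- The function whose transform in the first variable is the derivative of `pFI f`: derivatives
in the other variables pass to `f`, the one in the first variable multiplies `f` by `-i t`. -/
def pDeriv (f : Vec (q+1) → E) (z : Vec (q+1)) : Vec (q+1) →L[ℝ] E :=
  (fderiv ℝ f z).comp (tanProj q) +
    (ContinuousLinearMap.proj (R := ℝ) (φ := fun _ : Fin (q+1) => ℝ) 0).smulRight
      (z 0 • (-Complex.I) • f z)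

lemma contDiff_pDeriv {f : Vec (q+1) → E} (hf : ContDiff ℝ ∞ f) : ContDiff ℝ ∞ (pDeriv f) := by
  have h1 : ContDiff ℝ ∞ (fderiv ℝ f) := hf.fderiv_right (by simp)
  unfold pDeriv
  refine (h1.clm_comp contDiff_const).add ?_
  refine contDiff_const.smulRight ?_
  have : ContDiff ℝ ∞ fun z : Vec (q+1) => z 0 := contDiff_apply ℝ ℝ 0
  exact this.smul (contDiff_const.smul hf)

lemma hasCompactSupport_pDeriv {f : Vec (q+1) → E} (hs : HasCompactSupport f) :
    HasCompactSupport (pDeriv f) := by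
  refine hs.mono' fun z hz => ?_
  by_contra h
  have h1 : fderiv ℝ f z = 0 := by
    by_contra h'
    exact h (support_fderiv_subset ℝ h')
  have h2 : f z = 0 := image_eq_zero_of_notMem_tsupport h
  exact hz (by simp [pDeriv, h1, h2])

lemma hasFDerivAt_pFI {f : Vec (q+1) → E} (hf : ContDiff ℝ ∞ f) (hs : HasCompactSupport f)
    (y : Vec (q+1)) : HasFDerivAt (pFI f) (pFI (pDeriv f) y) y := by
  have hA := contDiff_pDeriv hf
  obtain ⟨b, hb, h⟩ := exists_bound hA.continuous (hasCompactSupport_pDeriv hs)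
  refine hasFDerivAt_integral_of_dominated_of_fderiv_le (s := Set.univ) (bound := b)
    (F := fun y t => Complex.exp (-Complex.I * ((t * y 0 : ℝ) : ℂ)) • f (Function.update y 0 t))
    (F' := fun y t =>
      Complex.exp (-Complex.I * ((t * y 0 : ℝ) : ℂ)) • pDeriv f (Function.update y 0 t))
    Filter.univ_mem
    (.of_forall fun y => (continuous_integrand hf.continuous y).aestronglyMeasurable)
    (integrable_integrand hf.continuous hs y)
    (continuous_integrand hA.continuous y).aestronglyMeasurable
    (.of_forall fun t y _ => h y t) hb (.of_forall fun t y _ => ?_)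
  simp_rw [update_eq_tanProj]
  have h0 : HasFDerivAt (fun y : Vec (q+1) => y 0)
      (ContinuousLinearMap.proj (R := ℝ) (φ := fun _ : Fin (q+1) => ℝ) 0) y :=
    hasFDerivAt_apply 0 y
  have h1 : HasFDerivAt (fun y : Vec (q+1) => Complex.exp (-Complex.I * ((t * y 0 : ℝ) : ℂ)))
      _ y := ((Complex.ofRealCLM.hasFDerivAt.comp y (h0.const_mul t)).const_mul (-Complex.I)).cexp
  have h2 : HasFDerivAt (fun y : Vec (q+1) => f (tanProj q y + t • timeVec q)) _ y :=
    ((hf.differentiable (by simp) _).hasFDerivAt).comp y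
      ((tanProj q).hasFDerivAt.add_const (t • timeVec q))
  refine (h1.smul h2).congr_fderiv ?_
  ext v
  have ht : (tanProj q y + t • timeVec q) 0 = t := by simp [tanProj, timeVec]
  simp only [pDeriv, ht]
  simp [smul_smul, ← Complex.coe_smul]
  congr 1; ring

/-- Integration by parts: a factor `y 0` becomes a derivative in the first variable. -/
lemma abs_mul_norm_pFI {f : Vec (q+1) → E} (hf : ContDiff ℝ ∞ f) (hs : HasCompactSupport f)
    (y : Vec (q+1)) :
    |y 0| * ‖pFI f y‖ = ‖pFI (fun z => fderiv ℝ f z (timeVec q)) y‖ := by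
  have hf' : ContDiff ℝ ∞ fun z => fderiv ℝ f z (timeVec q) :=
    (hf.fderiv_right (by simp)).clm_apply contDiff_const
  have hs' : HasCompactSupport fun z => fderiv ℝ f z (timeVec q) := hs.fderiv_apply ℝ _
  have hu : ∀ t : ℝ, HasDerivAt (fun t : ℝ => Complex.exp (-Complex.I * ((t * y 0 : ℝ) : ℂ)))
      ((-Complex.I * y 0) * Complex.exp (-Complex.I * ((t * y 0 : ℝ) : ℂ))) t := fun t => by
    have := (((hasDerivAt_id' t).mul_const (y 0)).ofReal_comp.const_mul (-Complex.I)).cexp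
    convert this using 1
    simp only [one_mul]; ring
  have hv : ∀ t : ℝ, HasDerivAt (fun t : ℝ => f (Function.update y 0 t))
      (fderiv ℝ f (Function.update y 0 t) (timeVec q)) t := fun t => by
    simp_rw [update_eq_tanProj]
    have h1 : HasDerivAt (fun t : ℝ => tanProj q y + t • timeVec q) (timeVec q) t := by
      simpa using ((hasDerivAt_id t).smul_const (timeVec q)).const_add (tanProj q y)
    exact ((hf.differentiable (by simp) _).hasFDerivAt).comp_hasDerivAt t h1
  have key := integral_bilinear_hasDerivAt_right_eq_neg_left_of_integrable
    (L := ContinuousLinearMap.lsmul ℝ ℂ (E := E)) (fun t _ => hu t) (fun t _ => hv t)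
    (by simpa using integrable_integrand hf'.continuous hs' y)
    (((integrable_integrand hf.continuous hs y).smul (-Complex.I * y 0 : ℂ)).congr
      (.of_forall fun t => by simp [mul_smul]))
    (by simpa using integrable_integrand hf.continuous hs y)
  have h3 : pFI (fun z => fderiv ℝ f z (timeVec q)) y = -((-Complex.I * y 0 : ℂ) • pFI f y) := by
    unfold pFI
    rw [← integral_smul]
    simpa [smul_smul] using key
  rw [h3, norm_neg, norm_smul]
  simp

lemma pFI_decay_zero (k : ℕ) : ∀ {f : Vec (q+1) → E}, ContDiff ℝ ∞ f → HasCompactSupport f →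
    ∃ C : ℝ, ∀ y, |y 0| ^ k * ‖pFI f y‖ ≤ C := by
  induction k with
  | zero => intro f hf hs; simpa using pFI_bounded hf.continuous hs
  | succ k ih =>
    intro f hf hs
    obtain ⟨C, hC⟩ := ih (f := fun z => fderiv ℝ f z (timeVec q))
      ((hf.fderiv_right (by simp)).clm_apply contDiff_const) (hs.fderiv_apply ℝ _)
    refine ⟨C, fun y => ?_⟩
    rw [pow_succ, mul_assoc, abs_mul_norm_pFI hf hs]
    exact hC y

lemma pFI_decay_norm (k : ℕ) {f : Vec (q+1) → E} (hf : ContDiff ℝ ∞ f)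
    (hs : HasCompactSupport f) : ∃ C : ℝ, ∀ y, ‖y‖ ^ k * ‖pFI f y‖ ≤ C := by
  obtain ⟨R, hR0, hR⟩ := exists_zero_outside_ball hs
  obtain ⟨C, hC⟩ := pFI_decay_zero k hf hs
  obtain ⟨D, hD⟩ := pFI_bounded hf.continuous hs
  refine ⟨2 ^ (k - 1) * (C + R ^ k * D), fun y => ?_⟩
  have hC0 : 0 ≤ C := le_trans (by positivity) (hC y)
  have hD0 : 0 ≤ D := le_trans (by positivity) (hD y)
  by_cases hy : R < ‖tanProj q y‖
  · rw [pFI_eq_zero hR hy]; simp; positivity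
  · push Not at hy
    calc ‖y‖ ^ k * ‖pFI f y‖ ≤ (|y 0| + R) ^ k * ‖pFI f y‖ := by
          gcongr; exact (norm_le_abs_add_tanProj y).trans (by gcongr)
      _ ≤ (2 ^ (k - 1) * (|y 0| ^ k + R ^ k)) * ‖pFI f y‖ := by
          gcongr; exact add_pow_le (abs_nonneg _) hR0 k
      _ = 2 ^ (k - 1) * (|y 0| ^ k * ‖pFI f y‖ + R ^ k * ‖pFI f y‖) := by ring
      _ ≤ _ := by gcongr; exacts [hC y, hD y]

end PartialTransform

lemma contDiff_pFI {q : ℕ} (n : ℕ) : ∀ {E : Type} [NormedAddCommGroup E] [NormedSpace ℂ E]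
    {f : Vec (q+1) → E}, ContDiff ℝ ∞ f → HasCompactSupport f → ContDiff ℝ n (pFI f) := by
  induction n with
  | zero =>
    intro E _ _ f hf hs
    exact contDiff_zero.2 (continuous_iff_continuousAt.2
      fun y => (hasFDerivAt_pFI hf hs y).continuousAt)
  | succ n ih =>
    intro E _ _ f hf hs
    refine contDiff_succ_iff_hasFDerivAt.2 ⟨pFI (pDeriv f), ?_, hasFDerivAt_pFI hf hs⟩
    exact ih (contDiff_pDeriv hf) (hasCompactSupport_pDeriv hs)

/-- Schwartz decay of all derivatives. The target space varies in the induction, since `pDeriv f`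
takes values in linear maps. -/
lemma pFI_decay {q : ℕ} (k n : ℕ) : ∀ {E : Type} [NormedAddCommGroup E] [NormedSpace ℂ E]
    {f : Vec (q+1) → E}, ContDiff ℝ ∞ f → HasCompactSupport f →
    ∃ C : ℝ, ∀ y, ‖y‖ ^ k * ‖iteratedFDeriv ℝ n (pFI f) y‖ ≤ C := by
  induction n with
  | zero => intro E _ _ f hf hs; simpa using pFI_decay_norm k hf hs
  | succ n ih =>
    intro E _ _ f hf hs
    have h : fderiv ℝ (pFI f) = pFI (pDeriv f) := funext fun y => (hasFDerivAt_pFI hf hs y).fderiv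
    simp_rw [← norm_iteratedFDeriv_fderiv, h]
    exact ih (contDiff_pDeriv hf) (hasCompactSupport_pDeriv hs)

/-- The transform in the first variable of a test function, as a Schwartz function. -/
def pFISchwartz {q : ℕ} {f : Vec (q+1) → ℂ} (hf : ContDiff ℝ ∞ f) (hs : HasCompactSupport f) :
    SchwartzMap (Vec (q+1)) ℂ where
  toFun := pFI f
  smooth' := contDiff_infty.2 fun n => contDiff_pFI n hf hs
  decay' k n := pFI_decay k n hf hs

/-! ### From local to global vanishing -/

/-- Transforms of test functions supported away from the support of `F₀u` are annihilated by `u`: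
a partition of unity reduces this to the local vanishing in the definition of the support. -/
lemma apply_pFISchwartz_eq_zero {q : ℕ} {u : TD (q+1)} {S : Set ℝ}
    (h : pfSupport u ⊆ {y : Vec (q+1) | y 0 ∈ S}) {f : Vec (q+1) → ℂ} (hf : ContDiff ℝ ∞ f)
    (hs : HasCompactSupport f) (hd : ∀ y ∈ tsupport f, y 0 ∉ S) :
    u (pFISchwartz hf hs) = 0 := by
  have hloc : ∀ y : tsupport f, ∃ U : Set (Vec (q+1)),
      IsOpen U ∧ (y : Vec (q+1)) ∈ U ∧ PFVanishesOn u U := fun y => by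
    by_contra hy
    exact hd y y.2 (h hy)
  choose U hUo hUm hUv using hloc
  obtain ⟨ρ, hρ⟩ := SmoothPartitionOfUnity.exists_isSubordinate
    (modelWithCornersSelf ℝ (Vec (q+1))) (isClosed_tsupport f) U hUo
    (fun y hy => Set.mem_iUnion.2 ⟨⟨y, hy⟩, hUm ⟨y, hy⟩⟩)
  have hρs : ∀ i, ContDiff ℝ ∞ (ρ i) := fun i => contMDiff_iff_contDiff.1 (ρ i).contMDiff
  have hfin := ρ.locallyFinite.finite_nonempty_inter_compact hs.isCompact
  set F := hfin.toFinset with hF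
  let g : tsupport f → Vec (q+1) → ℂ := fun i z => (ρ i z : ℂ) * f z
  have hg : ∀ i, ContDiff ℝ ∞ (g i) := fun i =>
    (Complex.ofRealCLM.contDiff.comp (hρs i)).mul hf
  have hgs : ∀ i, HasCompactSupport (g i) := fun i => hs.mul_left
  have hsum : ∀ z, ∑ i ∈ F, g i z = f z := fun z => by
    by_cases hz : z ∈ tsupport f
    · have h1 : ∑ᶠ i, ρ i z = 1 := ρ.sum_eq_one hz
      have h2 : ∑ᶠ i, ρ i z = ∑ i ∈ F, ρ i z := by
        refine finsum_eq_sum_of_support_subset _ fun i hi => ?_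
        simp only [hF, Set.Finite.coe_toFinset, Set.mem_ofPred_eq]
        exact ⟨z, hi, hz⟩
      simp only [g]
      rw [← Finset.sum_mul, ← Complex.ofReal_sum, ← h2, h1]; simp
    · simp [g, image_eq_zero_of_notMem_tsupport hz]
  have hdec : pFISchwartz hf hs = ∑ i ∈ F, pFISchwartz (hg i) (hgs i) := by
    ext y
    rw [sum_apply]
    change pFI f y = ∑ i ∈ F, pFI (g i) y
    unfold pFI
    rw [← integral_finsetSum _ fun i _ => integrable_integrand (hg i).continuous (hgs i) y]
    simp_rw [← Finset.smul_sum, hsum]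
  rw [hdec, map_sum]
  refine Finset.sum_eq_zero fun i _ => ?_
  refine hUv i ((hgs i).toSchwartzMap (hg i)) _ (hgs i) ?_ fun y => rfl
  refine (closure_mono fun z hz => ?_).trans (hρ i)
  intro h0
  have h0' : ρ i z = 0 := h0
  exact hz (by change (ρ i z : ℂ) * f z = 0; simp [h0'])

/-! ### The transform in the other variables -/

/-- The Fourier transform in all variables but the first. -/
def tFI {q : ℕ} (f : Vec (q+1) → ℂ) (y : Vec (q+1)) : ℂ :=
  ∫ z : Vec q, Complex.exp (-Complex.I * ((∑ j, z j * y j.succ : ℝ) : ℂ)) *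
    f (Fin.cons (y 0) z)

lemma norm_le_norm_cons {q : ℕ} (a : ℝ) (z : Vec q) :
    ‖z‖ ≤ ‖(Fin.cons a z : Vec (q+1))‖ :=
  (pi_norm_le_iff_of_nonneg (norm_nonneg _)).2 fun j => by
    simpa using norm_le_pi_norm (Fin.cons a z : Vec (q+1)) j.succ

lemma contDiff_cons {q : ℕ} :
    ContDiff ℝ ∞ fun p : Vec (q+1) × Vec q => (Fin.cons (p.1 0) p.2 : Vec (q+1)) := by
  rw [contDiff_pi]
  intro i
  refine Fin.cases ?_ (fun j => ?_) i
  · simp only [Fin.cons_zero]; fun_prop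
  · simp only [Fin.cons_succ]; fun_prop

/-- Smoothness under the integral sign, read off from the smoothness of convolutions (here with
the constant `1`) depending on a parameter. -/
lemma contDiff_tFI {q : ℕ} {f : Vec (q+1) → ℂ} (hf : ContDiff ℝ ∞ f)
    (hs : HasCompactSupport f) : ContDiff ℝ ∞ (tFI f) := by
  obtain ⟨R, hR0, hR⟩ := exists_zero_outside_ball hs
  let g : Vec (q+1) → Vec q → ℂ := fun y z =>
    Complex.exp (-Complex.I * ((∑ j, (-z) j * y j.succ : ℝ) : ℂ)) * f (Fin.cons (y 0) (-z))
  have hg : ContDiff ℝ ∞ ↿g := by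
    have h1 : ContDiff ℝ ∞ fun p : Vec (q+1) × Vec q => ∑ j, (-p.2) j * p.1 j.succ := by
      refine ContDiff.sum fun j _ => ?_
      simp only [Pi.neg_apply]
      fun_prop
    have h2 : ContDiff ℝ ∞ fun p : Vec (q+1) × Vec q => f (Fin.cons (p.1 0) (-p.2)) :=
      hf.comp (contDiff_cons.comp (contDiff_fst.prodMk contDiff_snd.neg))
    exact ((contDiff_const.mul (Complex.ofRealCLM.contDiff.comp h1)).cexp).mul h2
  have key := contDiffOn_convolution_right_with_param (μ := volume) (n := ⊤)
    (f := fun _ : Vec q => (1 : ℂ)) (ContinuousLinearMap.mul ℝ ℂ) (g := g) (s := Set.univ)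
    (k := Metric.closedBall 0 R) isOpen_univ (isCompact_closedBall _ _)
    (fun y z _ hz => by
      have : f (Fin.cons (y 0) (-z)) = 0 := hR _ <| by
        refine lt_of_lt_of_le ?_ (norm_le_norm_cons _ _)
        simpa using hz
      simp [g, this])
    (locallyIntegrable_const _) hg.contDiffOn
  rw [Set.univ_prod_univ, contDiffOn_univ] at key
  have h3 := key.comp (contDiff_id.prodMk (contDiff_const (c := (0 : Vec q))))
  convert h3 using 1
  funext y
  simp [tFI, convolution, g]

lemma tFI_update {q : ℕ} (f : Vec (q+1) → ℂ) (y : Vec (q+1)) (t : ℝ) :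
    tFI f (Function.update y 0 t) =
      ∫ z : Vec q, Complex.exp (-Complex.I * ((∑ j, z j * y j.succ : ℝ) : ℂ)) *
        f (Fin.cons t z) := by
  simp [tFI, Fin.succ_ne_zero]

/-- Fubini: `F = F₀ F'`, where `F'` transforms the variables other than the first. -/
lemma fullFourierIntegral_eq {q : ℕ} {f : Vec (q+1) → ℂ} (hf : Continuous f)
    (hs : HasCompactSupport f) (y : Vec (q+1)) :
    fullFourierIntegral f y = pFI (tFI f) y := by
  have hint : Integrable fun x : Vec (q+1) =>
      Complex.exp (-Complex.I * ((∑ i, x i * y i : ℝ) : ℂ)) * f x := by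
    refine Continuous.integrable_of_hasCompactSupport (by fun_prop) hs.mul_left
  have mp := (volume_preserving_piFinSuccAbove (fun _ : Fin (q+1) => ℝ) 0).symm
  have hint2 := mp.integrable_comp_emb (MeasurableEquiv.measurableEmbedding _) |>.2 hint
  unfold fullFourierIntegral
  rw [← mp.integral_comp (MeasurableEquiv.measurableEmbedding _)]
  rw [Measure.volume_eq_prod] at hint2 ⊢
  refine (integral_prod _ hint2).trans ?_
  unfold pFI
  congr 1
  funext t
  rw [tFI_update, smul_eq_mul, ← integral_const_mul]
  congr 1
  funext z
  rw [Function.comp_apply]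
  have : (MeasurableEquiv.piFinSuccAbove (fun _ : Fin (q+1) => ℝ) 0).symm (t, z)
      = (Fin.cons t z : Vec (q+1)) := by
    simp [MeasurableEquiv.piFinSuccAbove]
    rfl
  rw [this, ← mul_assoc, ← Complex.exp_add, Fin.sum_univ_succ]
  simp [mul_add]

/-! ### Approximation by cutoffs in the other variables -/

lemma norm_tanProj (q : ℕ) : ‖tanProj q‖ ≤ 1 :=
  ContinuousLinearMap.opNorm_le_bound _ zero_le_one fun y => by
    simpa using norm_tanProj_le y

lemma contDiff_dilate {q : ℕ} {η : Vec (q+1) → ℂ} (hη : ContDiff ℝ ∞ η) (c : ℝ) :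
    ContDiff ℝ ∞ fun y => η (c • tanProj q y) :=
  hη.comp (c • tanProj q).contDiff

/-- All derivatives of the dilated cutoff `η(c y')` minus its value at `0` are `O(c)`, up to a
linear weight: the function itself by the mean value inequality, its derivatives because each
one brings out a factor `c`. -/
lemma cutoff_deriv_bound {q : ℕ} {η : Vec (q+1) → ℂ} (hη : ContDiff ℝ ∞ η)
    (hs : HasCompactSupport η) (i : ℕ) : ∃ B : ℝ, 0 ≤ B ∧ ∀ c : ℝ, 0 ≤ c → c ≤ 1 →
      ∀ y, ‖iteratedFDeriv ℝ i (fun y => η (c • tanProj q y) - η 0) y‖ ≤ B * c * (1 + ‖y‖) := by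
  cases i with
  | zero =>
    obtain ⟨C, hC⟩ := hη.lipschitzWith_of_hasCompactSupport hs (by simp)
    refine ⟨C, C.2, fun c hc _ y => ?_⟩
    have h1 := hC.dist_le_mul (c • tanProj q y) 0
    rw [dist_eq_norm, dist_zero_right, norm_smul, Real.norm_of_nonneg hc] at h1
    rw [norm_iteratedFDeriv_zero]
    refine h1.trans ?_
    rw [mul_assoc]
    have := norm_tanProj_le y
    gcongr
    linarith
  | succ i =>
    obtain ⟨C, hC⟩ := (hs.iteratedFDeriv (𝕜 := ℝ) (i+1)).exists_bound_of_continuous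
      (hη.continuous_iteratedFDeriv (m := i+1) (by exact_mod_cast le_top))
    refine ⟨C, (norm_nonneg _).trans (hC 0), fun c hc hc1 y => ?_⟩
    have hC0 : 0 ≤ C := (norm_nonneg _).trans (hC 0)
    rw [← norm_iteratedFDeriv_fderiv]
    have hfd : fderiv ℝ (fun y => η (c • tanProj q y) - η 0) =
        fderiv ℝ (fun y => η (c • tanProj q y)) := funext fun y => fderiv_sub_const _
    rw [hfd, norm_iteratedFDeriv_fderiv]
    have h1 := (c • tanProj q).iteratedFDeriv_comp_right hη y (i := i+1) (by exact_mod_cast le_top)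
    change ‖iteratedFDeriv ℝ (i+1) (η ∘ (c • tanProj q)) y‖ ≤ _
    rw [h1]
    have hn : ‖c • tanProj q‖ ≤ c := by
      rw [norm_smul, Real.norm_of_nonneg hc]
      exact mul_le_of_le_one_right hc (norm_tanProj q)
    calc _ ≤ ‖iteratedFDeriv ℝ (i+1) η ((c • tanProj q) y)‖ * ∏ _j : Fin (i+1), ‖c • tanProj q‖ :=
          ContinuousMultilinearMap.norm_compContinuousLinearMap_le _ _
      _ ≤ C * c ^ (i+1) := by
          rw [Finset.prod_const, Finset.card_fin]
          gcongr
          exact hC _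
      _ ≤ C * c := by
          gcongr
          exact pow_le_of_le_one hc hc1 (by simp)
      _ ≤ C * c * (1 + ‖y‖) :=
          le_mul_of_one_le_right (by positivity) (by linarith [norm_nonneg y])

/-- Cutting a Schwartz function off in the last `q` variables only, at scale `1 / c n → ∞`,
approximates it in the Schwartz topology. -/
lemma tendsto_cutoff {q : ℕ} {η : Vec (q+1) → ℂ} (hη : ContDiff ℝ ∞ η)
    (hs : HasCompactSupport η) (h0 : η 0 = 1) {c : ℕ → ℝ} (hc0 : ∀ n, 0 ≤ c n)
    (hc1 : ∀ n, c n ≤ 1) (hc : Filter.Tendsto c Filter.atTop (𝓝 0))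
    (ψ : SchwartzMap (Vec (q+1)) ℂ) (ψ' : ℕ → SchwartzMap (Vec (q+1)) ℂ)
    (hψ : ∀ n y, ψ' n y = η (c n • tanProj q y) * ψ y) :
    Filter.Tendsto ψ' Filter.atTop (𝓝 ψ) := by
  rw [(schwartz_withSeminorms ℂ (Vec (q+1)) ℂ).tendsto_nhds]
  rintro ⟨k, m⟩ ε hε
  choose B hB0 hB using cutoff_deriv_bound hη hs
  set M : ℝ := ∑ i ∈ Finset.range (m+1), (m.choose i : ℝ) * B i *
    (SchwartzMap.seminorm ℂ k (m - i) ψ + SchwartzMap.seminorm ℂ (k+1) (m - i) ψ) with hM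
  have hM0 : 0 ≤ M := Finset.sum_nonneg fun i _ => by
    have := hB0 i
    positivity
  have key : ∀ n, SchwartzMap.seminorm ℂ k m (ψ' n - ψ) ≤ M * c n := fun n => by
    refine SchwartzMap.seminorm_le_bound ℂ k m _ (mul_nonneg hM0 (hc0 n)) fun y => ?_
    have he : ⇑(ψ' n - ψ) = fun y => (η (c n • tanProj q y) - η 0) * ψ y := by
      funext y
      rw [sub_apply, hψ, h0]; ring
    have hg : ContDiff ℝ ∞ fun y => η (c n • tanProj q y) - η 0 :=
      (contDiff_dilate hη _).sub contDiff_const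
    rw [he]
    calc _ ≤ ‖y‖ ^ k * ∑ i ∈ Finset.range (m+1), (m.choose i : ℝ) *
          ‖iteratedFDeriv ℝ i (fun y => η (c n • tanProj q y) - η 0) y‖ *
            ‖iteratedFDeriv ℝ (m - i) ψ y‖ := by
          gcongr
          exact norm_iteratedFDeriv_mul_le hg (ψ.smooth ⊤) y (by exact_mod_cast le_top)
      _ ≤ M * c n := by
          rw [hM, Finset.mul_sum, Finset.sum_mul]
          refine Finset.sum_le_sum fun i _ => ?_
          have h1 := SchwartzMap.le_seminorm ℂ k (m - i) ψ y
          have h2 := SchwartzMap.le_seminorm ℂ (k+1) (m - i) ψ y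
          have hBi := hB0 i
          have hcn := hc0 n
          calc _ ≤ ‖y‖ ^ k * ((m.choose i : ℝ) * (B i * c n * (1 + ‖y‖)) *
                ‖iteratedFDeriv ℝ (m - i) ψ y‖) := by
                gcongr
                exact hB i _ (hc0 n) (hc1 n) y
            _ = (m.choose i : ℝ) * B i * (‖y‖ ^ k * ‖iteratedFDeriv ℝ (m - i) ψ y‖ +
                ‖y‖ ^ (k+1) * ‖iteratedFDeriv ℝ (m - i) ψ y‖) * c n := by ring
            _ ≤ _ := by gcongr
  have hlim : Filter.Tendsto (fun n => M * c n) Filter.atTop (𝓝 0) := by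
    simpa using hc.const_mul M
  filter_upwards [hlim.eventually_lt_const hε] with n hn
  exact (key n).trans_lt hn

/-- The inclusion of supports on the level of test functions, with an arbitrary set `S` of
frequencies in place of a half-line. The full transform `ψ = F f = F₀ (F' f)` is the limit of its
cutoffs in the last `q` variables, and these are the transforms in the first variable of the
correspondingly cut off `F' f`, which are test functions supported away from `S × ℝ^q`. -/
lemma apply_full_eq_zero {q : ℕ} {u : TD (q+1)} {S : Set ℝ}
    (h : pfSupport u ⊆ {y : Vec (q+1) | y 0 ∈ S}) {f : Vec (q+1) → ℂ} (hf : ContDiff ℝ ∞ f)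
    (hs : HasCompactSupport f) (hd : ∀ y ∈ tsupport f, y 0 ∉ S)
    (ψ : SchwartzMap (Vec (q+1)) ℂ) (hψ : ∀ y, ψ y = fullFourierIntegral f y) : u ψ = 0 := by
  obtain ⟨R, hR0, hR⟩ := exists_zero_outside_ball hs
  let b : ContDiffBump (0 : Vec (q+1)) := ⟨1, 2, one_pos, one_lt_two⟩
  let η : Vec (q+1) → ℂ := fun y => (b y : ℂ)
  have hη : ContDiff ℝ ∞ η := Complex.ofRealCLM.contDiff.comp b.contDiff
  have hηs : HasCompactSupport η := b.hasCompactSupport.comp_left (g := Complex.ofReal) rfl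
  have hη0 : η 0 = 1 := by
    have : b 0 = 1 := b.one_of_mem_closedBall (by simp [b])
    simp [η, this]
  have hη2 : ∀ z, 2 < ‖z‖ → η z = 0 := fun z hz => by
    have : b z = 0 := b.zero_of_le_dist (by simpa [b] using hz.le)
    simp [η, this]
  let c : ℕ → ℝ := fun n => 1 / ((n : ℝ) + 1)
  have hcpos : ∀ n, 0 < c n := fun n => by positivity
  -- `φ n` is the compactly supported function with transform `ψ` cut off at scale `n + 1`.
  let φ : ℕ → Vec (q+1) → ℂ := fun n y => η (c n • tanProj q y) * tFI f y
  have hφ : ∀ n, ContDiff ℝ ∞ (φ n) := fun n =>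
    (contDiff_dilate hη _).mul (contDiff_tFI hf hs)
  set K : Set ℝ := (fun y : Vec (q+1) => y 0) '' tsupport f with hK
  have hKc : IsCompact K := hs.isCompact.image (continuous_apply 0)
  have htf : ∀ y, tFI f y ≠ 0 → y 0 ∈ K := fun y hy => by
    by_contra hyK
    refine hy ?_
    have : ∀ z : Vec q, f (Fin.cons (y 0) z) = 0 := fun z =>
      image_eq_zero_of_notMem_tsupport fun hm => hyK ⟨_, hm, by simp⟩
    simp [tFI, this]
  have hφK : ∀ n, tsupport (φ n) ⊆ {y | y 0 ∈ K} := fun n =>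
    closure_minimal (fun y hy => htf y (right_ne_zero_of_mul hy))
      (hKc.isClosed.preimage (continuous_apply 0))
  obtain ⟨T, hT⟩ := hKc.isBounded.exists_norm_le
  have hφs : ∀ n, HasCompactSupport (φ n) := fun n => by
    refine HasCompactSupport.intro (isCompact_closedBall 0 (T + 2 / c n)) fun y hy => ?_
    by_contra hne
    have h1 : |y 0| ≤ T := hT _ (htf y (right_ne_zero_of_mul hne))
    have h2 : ‖c n • tanProj q y‖ ≤ 2 := by
      by_contra h2
      exact left_ne_zero_of_mul hne (hη2 _ (not_le.1 h2))
    rw [norm_smul, Real.norm_of_nonneg (hcpos n).le, mul_comm, ← le_div_iff₀ (hcpos n)] at h2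
    refine hy ?_
    rw [mem_closedBall_zero_iff]
    exact (norm_le_abs_add_tanProj y).trans (add_le_add h1 h2)
  have hzero : ∀ n, u (pFISchwartz (hφ n) (hφs n)) = 0 := fun n =>
    apply_pFISchwartz_eq_zero h _ _ fun y hy => by
      obtain ⟨x, hx, hxy⟩ := hφK n hy
      have := hd x hx
      rwa [show x 0 = y 0 from hxy] at this
  have hlim := tendsto_cutoff hη hηs hη0 (fun n => (hcpos n).le)
    (fun n => by
      simp only [c]
      rw [div_le_one (by positivity)]
      linarith [(Nat.cast_nonneg n : (0 : ℝ) ≤ n)])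
    tendsto_one_div_add_atTop_nhds_zero_nat ψ (fun n => pFISchwartz (hφ n) (hφs n))
    (fun n y => by
      -- the cutoff does not involve the first variable, so it commutes with the transform
      rw [hψ, fullFourierIntegral_eq hf.continuous hs]
      change pFI (φ n) y = _
      unfold pFI
      rw [← integral_const_mul]
      congr 1
      funext t
      simp only [φ, tanProj_update, smul_eq_mul]
      ring)
  have hu := (u.continuous.tendsto ψ).comp hlim
  refine tendsto_nhds_unique hu ?_
  simp only [Function.comp_def, hzero]
  exact tendsto_const_nhds

lemma ffSupport_subset {q : ℕ} {u : TD (q+1)} {S : Set ℝ} (hS : IsClosed S)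
    (h : pfSupport u ⊆ {y : Vec (q+1) | y 0 ∈ S}) :
    ffSupport u ⊆ {y : Vec (q+1) | y 0 ∈ S} := by
  intro y hy
  by_contra hyS
  refine hy ⟨{y | y 0 ∈ Sᶜ}, hS.isOpen_compl.preimage (continuous_apply 0), hyS, ?_⟩
  intro φ ψ hs hsub hψ
  exact apply_full_eq_zero h (φ.smooth ⊤) hs (fun y hy => hsub hy) ψ hψ

/-- If the Fourier transform in the first (time) variable of the tempered
distribution `u` on `ℝ^{1+q}` has support in the half-space `[α,∞) × ℝ^q`, then so does the
full Fourier transform of `u` (in all `1+q` variables); analogously for `(-∞,β] × ℝ^q`. -/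
theorem statement1 (q m : ℕ) (hq : 1 ≤ q) (u : Fin m → TD (q+1)) :
    (∀ α : ℝ, (∀ i, pfSupport (u i) ⊆ {y : Vec (q+1) | α ≤ y 0}) →
      ∀ i, ffSupport (u i) ⊆ {y : Vec (q+1) | α ≤ y 0}) ∧
    (∀ β : ℝ, (∀ i, pfSupport (u i) ⊆ {y : Vec (q+1) | y 0 ≤ β}) →
      ∀ i, ffSupport (u i) ⊆ {y : Vec (q+1) | y 0 ≤ β}) := by
  exact ⟨fun α h i => ffSupport_subset (S := Set.Ici α) isClosed_Ici (h i),
    fun β h i => ffSupport_subset (S := Set.Iic β) isClosed_Iic (h i)⟩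

end
end
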